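/- There exists an absolute constant C such that for every odd prime p, every real K ≥ 1, and all nonempty sets A,B ⊆ F_p with 0 ∉ A, 0 ∉ B and |A+B| ≤ K|A|, one has E⁺(A^{−1}, B^{−1}) − K²|A|²|B|²/p ≤ C·( K^{5/4}|A|^{5/4}|B|^{3/2} + K²|A|² ). -/

import Mathlib

open Finset

/-- The sumset `A + B = {a + b : a ∈ A, b ∈ B}`. -/
def sumSet (p : ℕ) (A B : Finset (ZMod p)) : Finset (ZMod p) :=
  (A ×ˢ B).image fun x => x.1 + x.2

/-- The common additive energy: quadruples `(x₁,x₂,y₁,y₂) ∈ X²×Y²` with `x₁+y₁ = x₂+y₂`. -/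
def addEnergy2 (p : ℕ) (X Y : Finset (ZMod p)) : ℕ :=
  (((X ×ˢ X) ×ˢ Y ×ˢ Y).filter fun x => x.1.1 + x.2.1 = x.1.2 + x.2.2).card


section PolyBasics
open MvPolynomial

lemma sum_choose3 (N : ℕ) : ∑ k ∈ Finset.range (N+1), (3+k-1).choose k = (N + 3).choose 3 := by
  induction N with
  | zero => simp
  | succ n ih =>
    rw [Finset.sum_range_succ, ih]
    have h : (3 + (n+1) - 1).choose (n+1) = (n+3).choose 2 := by
      have : 3 + (n+1) - 1 = n + 3 := by omega
      rw [this]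
      exact (Nat.choose_symm_of_eq_add (by omega))
    rw [h, show n + 1 + 3 = (n+3)+1 from rfl, Nat.choose_succ_succ (n+3) 2, add_comm]

lemma finrank_rtd {K : Type*} [Field K] (N : ℕ) :
    Module.finrank K (restrictTotalDegree (Fin 3) K N) = (N + 3).choose 3 := by
  classical
  have h1 : Module.finrank K (restrictTotalDegree (Fin 3) K N)
      = Nat.card {n : Fin 3 →₀ ℕ | (n.sum fun _ e => e) ≤ N} :=
    Module.finrank_eq_nat_card_basis (basisRestrictSupport K _)
  rw [h1]
  have h2 : {n : Fin 3 →₀ ℕ | (n.sum fun _ e => e) ≤ N}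
      = (((Finset.range (N+1)).biUnion fun k => (Finset.univ : Finset (Fin 3)).finsuppAntidiag k : Finset (Fin 3 →₀ ℕ)) : Set (Fin 3 →₀ ℕ)) := by
    ext n
    simp [Finset.mem_finsuppAntidiag, Finsupp.sum_fintype, Nat.lt_succ_iff]
  rw [h2]
  simp only [Finset.coe_sort_coe, Nat.card_eq_fintype_card, Fintype.card_coe]
  rw [Finset.card_biUnion]
  · simp only [Finset.card_finsuppAntidiag_nat_eq_choose, Finset.card_univ, Fintype.card_fin]
    exact sum_choose3 N
  · intro a _ b _ hab
    rw [Function.onFun, Finset.disjoint_left]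
    intro n hn hn'
    simp [Finset.mem_finsuppAntidiag] at hn hn'
    omega

lemma six_choose (N : ℕ) : 6 * (N + 3).choose 3 = (N+1)*(N+2)*(N+3) := by
  induction N with
  | zero => rfl
  | succ n ih =>
    have h2 : (n + 3).choose 2 * 2 = (n+3)*(n+2) := by
      rw [Nat.choose_two_right]; 
      exact Nat.div_mul_cancel (by have := Nat.even_mul_pred_self (n+3); exact this.two_dvd)
    have : (n+1+3).choose 3 = (n+3).choose 2 + (n+3).choose 3 := Nat.choose_succ_succ _ _
    rw [this]; nlinarith

lemma totalDegree_pderiv_le {K : Type*} [Field K] (i : Fin 3) (f : MvPolynomial (Fin 3) K) :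
    (pderiv i f).totalDegree ≤ f.totalDegree - 1 := by
  classical
  rw [totalDegree, Finset.sup_le_iff]
  intro m hm
  rw [mem_support_iff, coeff_pderiv] at hm
  have h : m + Finsupp.single i 1 ∈ f.support := by
    rw [mem_support_iff]; exact left_ne_zero_of_mul hm
  have := le_totalDegree h
  rw [Finsupp.sum_add_index' (by simp) (by simp)] at this
  simp at this
  omega

/-- chain rule -/
lemma chain_rule {K S : Type*} [Field K] [CommRing S] [Algebra K S] (d : Derivation K S S)
    (g : Fin 3 → S) (f : MvPolynomial (Fin 3) K) :
    d (aeval g f) = ∑ i, aeval g (pderiv i f) * d (g i) := by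
  induction f using MvPolynomial.induction_on with
  | C a => simp
  | add p q hp hq => simp [hp, hq, add_mul, Finset.sum_add_distrib]
  | mul_X p i h =>
    simp only [map_mul, aeval_X, Derivation.leibniz, h, smul_eq_mul, pderiv_mul, map_add, pderiv_X,
      add_mul, Finset.sum_add_distrib]
    fin_cases i <;> simp [Fin.sum_univ_three, Pi.single_apply] <;> ring

end PolyBasics


section Bezout
open MvPolynomial

lemma choose_second_diff (d e M : ℕ) :
    (M + d + e + 3).choose 3 + (M+3).choose 3 ≤ (M + e + 3).choose 3 + (M + d + 3).choose 3 + d * e * (M + d + e + 2) := by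
  have h1 := six_choose (M + d + e)
  have h2 := six_choose M
  have h3 := six_choose (M + e)
  have h4 := six_choose (M + d)
  have : 6 * ((M + d + e + 3).choose 3 + (M+3).choose 3) ≤ 6 * ((M + e + 3).choose 3 + (M + d + 3).choose 3 + d * e * (M + d + e + 2)) := by
    rw [mul_add, mul_add, mul_add, h1, h2, h3, h4]
    zify
    have : (0:ℤ) ≤ d * e * d := by positivity
    have : (0:ℤ) ≤ d * e * e := by positivity
    nlinarith
  omega

lemma bezout_lines {K : Type*} [Field K] (f g : MvPolynomial (Fin 3) K) (hf : Irreducible f)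
    (hfg : ¬ f ∣ g) (n : ℕ) (φ : Fin n → MvPolynomial (Fin 3) K →ₐ[K] Polynomial K)
    (z : Fin n → K) (hz : Function.Injective z) (j j' : Fin 3)
    (hj : ∀ i, φ i (X j) = Polynomial.C (z i)) (hj' : ∀ i, φ i (X j') = Polynomial.X)
    (h1 : ∀ i, φ i f = 0) (h2 : ∀ i, φ i g = 0) : n ≤ f.totalDegree * g.totalDegree := by
  classical
  by_contra hcon
  push Not at hcon
  set d := f.totalDegree with hd
  set e := g.totalDegree with he
  have hf0 : f ≠ 0 := hf.ne_zero
  have hg0 : g ≠ 0 := by rintro rfl; exact hfg (dvd_zero _)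
  have hfp : Prime f := hf.prime
  obtain ⟨M, hM⟩ : ∃ M, M = n^2 + 2*d*e + n + 1 := ⟨_, rfl⟩
  set N := M + d + e with hN
  set k := N - n with hk
  have hnN : n ≤ N := by omega
  let Θ : (Fin n × Fin k → K) →ₗ[K] MvPolynomial (Fin 3) K :=
    Fintype.linearCombination K (fun q : Fin n × Fin k => (X j ^ (q.1:ℕ) * X j' ^ (q.2:ℕ) : MvPolynomial (Fin 3) K))
  let V1 := restrictTotalDegree (Fin 3) K (M + e)
  let V2 := restrictTotalDegree (Fin 3) K (M + d)
  let V0 := restrictTotalDegree (Fin 3) K M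
  let V := restrictTotalDegree (Fin 3) K N
  let Ψ : ((Fin n × Fin k → K) × V1 × V2) →ₗ[K] MvPolynomial (Fin 3) K :=
    Θ.coprod (((LinearMap.mulLeft K f).comp V1.subtype).coprod ((LinearMap.mulLeft K g).comp V2.subtype))
  have hrange : LinearMap.range Ψ ≤ V := by
    rintro _ ⟨⟨θ, a, b⟩, rfl⟩
    simp only [Ψ, LinearMap.coprod_apply, LinearMap.comp_apply, LinearMap.mulLeft_apply, Submodule.subtype_apply]
    refine V.add_mem ?_ (V.add_mem ?_ ?_)
    · simp only [Θ, Fintype.linearCombination_apply]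
      refine V.sum_mem fun q _ => V.smul_mem _ ?_
      rw [mem_restrictTotalDegree]
      refine (totalDegree_mul _ _).trans ?_
      refine (add_le_add (totalDegree_pow _ _) (totalDegree_pow _ _)).trans ?_
      simp only [totalDegree_X, mul_one]
      have := q.1.2; have := q.2.2
      omega
    · rw [mem_restrictTotalDegree]
      refine (totalDegree_mul _ _).trans ?_
      have := (mem_restrictTotalDegree _ _ _).1 a.2
      omega
    · rw [mem_restrictTotalDegree]
      refine (totalDegree_mul _ _).trans ?_
      have := (mem_restrictTotalDegree _ _ _).1 b.2
      omega
  have hmg : ∀ c : V0, g * (c : MvPolynomial (Fin 3) K) ∈ V1 := by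
    intro c
    rw [mem_restrictTotalDegree]
    refine (totalDegree_mul _ _).trans ?_
    have := (mem_restrictTotalDegree _ _ _).1 c.2
    omega
  have hmf : ∀ c : V0, f * (c : MvPolynomial (Fin 3) K) ∈ V2 := by
    intro c
    rw [mem_restrictTotalDegree]
    refine (totalDegree_mul _ _).trans ?_
    have := (mem_restrictTotalDegree _ _ _).1 c.2
    omega
  let T : V0 →ₗ[K] ((Fin n × Fin k → K) × V1 × V2) :=
    (0 : V0 →ₗ[K] (Fin n × Fin k → K)).prod
      ((-((LinearMap.mulLeft K g).comp V0.subtype).codRestrict V1 hmg).prod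
        (((LinearMap.mulLeft K f).comp V0.subtype).codRestrict V2 hmf))
  have hker : LinearMap.ker Ψ ≤ LinearMap.range T := by
    rintro ⟨θ, a, b⟩ hθ
    rw [LinearMap.mem_ker] at hθ
    simp only [Ψ, LinearMap.coprod_apply, LinearMap.comp_apply, LinearMap.mulLeft_apply, Submodule.subtype_apply] at hθ
    have hθ0 : θ = 0 := by
      have key : ∀ (l : Fin k) (i : Fin n), ∑ i' : Fin n, θ (i', l) * z i ^ (i' : ℕ) = 0 := by
        intro l i
        have h := congrArg (φ i) hθ
        simp only [map_add, map_mul, h1, h2, zero_mul, add_zero, map_zero] at h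
        simp only [Θ, Fintype.linearCombination_apply, map_sum, map_smul, map_mul, map_pow, hj, hj'] at h
        have h' := congrArg (fun q => Polynomial.coeff q (l:ℕ)) h
        simp only [Polynomial.finsetSum_coeff, Polynomial.coeff_zero, Polynomial.coeff_smul, ← Polynomial.C_pow,
          Polynomial.coeff_C_mul, Polynomial.coeff_X_pow, smul_eq_mul] at h'
        rw [Fintype.sum_prod_type] at h'
        rw [← h']
        refine Finset.sum_congr rfl fun i' _ => ?_
        rw [Finset.sum_eq_single l]
        · simp
        · intro b _ hb
          rw [if_neg]; · simp
          intro h; exact hb (Fin.ext h.symm)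
        · simp
      ext ⟨i', l⟩
      have := Matrix.eq_zero_of_forall_index_sum_mul_pow_eq_zero hz (key l)
      exact congrFun this i'
    subst hθ0
    simp only [map_zero, zero_add] at hθ
    have hb : f ∣ (b : MvPolynomial (Fin 3) K) := by
      have : f ∣ g * (b : MvPolynomial (Fin 3) K) := ⟨-a, by linear_combination hθ⟩
      exact (hfp.dvd_or_dvd this).resolve_left hfg
    obtain ⟨c, hc⟩ := hb
    have ha : (a : MvPolynomial (Fin 3) K) = - (g * c) := by
      have : f * (a + g * c) = 0 := by rw [hc] at hθ; linear_combination hθ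
      have := (mul_eq_zero.1 this).resolve_left hf0
      linear_combination this
    have hcV : c ∈ V0 := by
      rw [mem_restrictTotalDegree]
      by_cases hc0 : c = 0
      · simp [hc0]
      have := (mem_restrictTotalDegree _ _ _).1 b.2
      rw [hc, totalDegree_mul_of_isDomain hf0 hc0] at this
      omega
    refine ⟨⟨c, hcV⟩, ?_⟩
    refine Prod.ext rfl (Prod.ext (Subtype.ext ?_) (Subtype.ext ?_))
    · simp [T, ha]; rfl
    · simp [T, hc]; rfl
  have hrn := LinearMap.finrank_range_add_finrank_ker Ψ
  have e1 := Submodule.finrank_mono hrange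
  have e2 := (Submodule.finrank_mono hker).trans (LinearMap.finrank_range_le T)
  have e3 : Module.finrank K ((Fin n × Fin k → K) × V1 × V2) = n * k + ((M + e + 3).choose 3 + (M+d+3).choose 3) := by
    rw [Module.finrank_prod, Module.finrank_prod, finrank_rtd, finrank_rtd]
    simp
  rw [e3] at hrn
  rw [finrank_rtd] at e1 e2
  have := choose_second_diff d e M
  have hfin : n * k ≤ d * e * (N + 2) := by
    have : (N + 3) = M + d + e + 3 := by omega
    rw [this] at e1
    have : N + 2 = M + d + e + 2 := by omega
    rw [this]
    omega
  have hk2 : n * k + n * n = n * N := by rw [← mul_add]; congr 1; omega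
  have : (d * e + 1) * N ≤ n * N := Nat.mul_le_mul_right _ hcon
  nlinarith

end Bezout


section Tri
open MvPolynomial

/-- type one line -/
noncomputable def L1 {K : Type*} [Field K] (w : K × K × K) : MvPolynomial (Fin 3) K →ₐ[K] Polynomial K :=
  aeval ![Polynomial.C w.1, Polynomial.X, Polynomial.C w.2.1 * Polynomial.X + Polynomial.C w.2.2]

/-- type two line -/
noncomputable def L2 {K : Type*} [Field K] (w : K × K × K) : MvPolynomial (Fin 3) K →ₐ[K] Polynomial K :=
  aeval ![Polynomial.X, Polynomial.C w.1, Polynomial.C w.2.1 * Polynomial.X + Polynomial.C w.2.2]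

variable {K : Type*} [Field K]

lemma bezout_L1 (f g : MvPolynomial (Fin 3) K) (hf : Irreducible f) (hfg : ¬ f ∣ g)
    (X : Finset (K × K × K)) (hX : Set.InjOn Prod.fst (X : Set (K × K × K)))
    (h1 : ∀ w ∈ X, L1 w f = 0) (h2 : ∀ w ∈ X, L1 w g = 0) :
    X.card ≤ f.totalDegree * g.totalDegree := by
  refine bezout_lines f g hf hfg X.card (fun i => L1 (X.equivFin.symm i).1)
    (fun i => (X.equivFin.symm i).1.1) ?_ 0 1 ?_ ?_ ?_ ?_
  · intro i i' h
    have := hX (X.equivFin.symm i).2 (X.equivFin.symm i').2 h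
    exact X.equivFin.symm.injective (Subtype.ext this)
  · intro i; simp [L1]
  · intro i; simp [L1]
  · intro i; exact h1 _ (X.equivFin.symm i).2
  · intro i; exact h2 _ (X.equivFin.symm i).2

lemma bezout_L2 (f g : MvPolynomial (Fin 3) K) (hf : Irreducible f) (hfg : ¬ f ∣ g)
    (X : Finset (K × K × K)) (hX : Set.InjOn Prod.fst (X : Set (K × K × K)))
    (h1 : ∀ w ∈ X, L2 w f = 0) (h2 : ∀ w ∈ X, L2 w g = 0) :
    X.card ≤ f.totalDegree * g.totalDegree := by
  refine bezout_lines f g hf hfg X.card (fun i => L2 (X.equivFin.symm i).1)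
    (fun i => (X.equivFin.symm i).1.1) ?_ 1 0 ?_ ?_ ?_ ?_
  · intro i i' h
    have := hX (X.equivFin.symm i).2 (X.equivFin.symm i').2 h
    exact X.equivFin.symm.injective (Subtype.ext this)
  · intro i; simp [L2]
  · intro i; simp [L2]
  · intro i; exact h1 _ (X.equivFin.symm i).2
  · intro i; exact h2 _ (X.equivFin.symm i).2

/-- the second order operator -/
noncomputable def Dop (f : MvPolynomial (Fin 3) K) :
    Derivation K (MvPolynomial (Fin 3) K) (MvPolynomial (Fin 3) K) :=
  (pderiv 2 f) • pderiv 1 - (pderiv 1 f) • pderiv 2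

lemma Dop_apply (f g : MvPolynomial (Fin 3) K) :
    Dop f g = pderiv 2 f * pderiv 1 g - pderiv 1 f * pderiv 2 g := by
  simp [Dop]

noncomputable def Phi (f : MvPolynomial (Fin 3) K) : MvPolynomial (Fin 3) K :=
  pderiv 1 f * Dop f (pderiv 2 f) - pderiv 2 f * Dop f (pderiv 1 f)

lemma Dop_degree (f g : MvPolynomial (Fin 3) K) :
    (Dop f g).totalDegree ≤ f.totalDegree + g.totalDegree := by
  rw [Dop_apply]
  refine (totalDegree_sub _ _).trans (max_le ?_ ?_) <;> refine (totalDegree_mul _ _).trans ?_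
  · have := totalDegree_pderiv_le 2 f
    have := totalDegree_pderiv_le 1 g
    omega
  · have := totalDegree_pderiv_le 1 f
    have := totalDegree_pderiv_le 2 g
    omega

lemma Phi_degree (f : MvPolynomial (Fin 3) K) : (Phi f).totalDegree ≤ 3 * f.totalDegree := by
  rw [Phi]
  have := totalDegree_pderiv_le 1 f
  have := totalDegree_pderiv_le 2 f
  have := Dop_degree f (pderiv 1 f)
  have := Dop_degree f (pderiv 2 f)
  refine (totalDegree_sub _ _).trans (max_le ?_ ?_) <;> refine (totalDegree_mul _ _).trans ?_ <;> omega

lemma L1_deriv (w : K × K × K) (g : MvPolynomial (Fin 3) K) :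
    Polynomial.derivative (L1 w g) = L1 w (pderiv 1 g) + Polynomial.C w.2.1 * L1 w (pderiv 2 g) := by
  have := chain_rule (Polynomial.derivative' (R := K)) ![Polynomial.C w.1, Polynomial.X, Polynomial.C w.2.1 * Polynomial.X + Polynomial.C w.2.2] g
  simp only [Fin.sum_univ_three] at this
  simp [Polynomial.derivative'_apply] at this
  rw [L1, this]; ring

lemma L1_Phi (w : K × K × K) (f : MvPolynomial (Fin 3) K) (h : L1 w f = 0) : L1 w (Phi f) = 0 := by
  have h0 := L1_deriv w f
  rw [h, Polynomial.derivative_zero] at h0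
  have hb : L1 w (pderiv 1 f) = - (Polynomial.C w.2.1 * L1 w (pderiv 2 f)) := by linear_combination -h0
  have hb' := congrArg Polynomial.derivative hb
  rw [Polynomial.derivative_neg, Polynomial.derivative_C_mul, L1_deriv, L1_deriv] at hb'
  rw [Phi, Dop_apply, Dop_apply]
  simp only [map_sub, map_mul]
  rw [hb]
  linear_combination -(L1 w (pderiv 2 f))^2 * hb'

lemma natDegree_aeval_le {S : Type*} [CommRing S] [Algebra K S] (f : MvPolynomial (Fin 3) K)
    (g : Fin 3 → Polynomial S) (hg : ∀ i, (g i).natDegree ≤ 1) : (aeval g f).natDegree ≤ f.totalDegree := by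
  have := aeval_natDegree_le (MvPolynomial.map (algebraMap K S) f) (m := f.totalDegree) (n := 1)
    (Finset.sup_mono (support_map_subset _ _)) g hg
  rwa [aeval_map_algebraMap, mul_one] at this

lemma irr_deg_pos (f : MvPolynomial (Fin 3) K) (hf : Irreducible f) : 1 ≤ f.totalDegree := by
  by_contra h
  have h0 : f.totalDegree = 0 := by omega
  rw [totalDegree_eq_zero_iff_eq_C] at h0
  apply hf.not_isUnit
  rw [h0]
  apply IsUnit.map
  rw [isUnit_iff_ne_zero]
  intro h1
  rw [h1, map_zero] at h0
  exact hf.ne_zero h0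

/-- case (d) -/
lemma tri_d (p : ℕ) [CharP K p] (f : MvPolynomial (Fin 3) K) (hf : Irreducible f)
    (hfp : f.totalDegree < p) (hd : f ∣ pderiv 2 f)
    (w w' : K × K × K) (hw : L2 w f = 0) (hw' : L2 w' f = 0) : w.1 = w'.1 := by
  have h1 := irr_deg_pos f hf
  have h0 : pderiv 2 f = 0 := by
    by_contra hne
    have := totalDegree_le_of_dvd_of_isDomain hd hne
    have := totalDegree_pderiv_le 2 f
    omega
  have hv : (2 : Fin 3) ∉ f.vars := by
    rw [mem_vars_iff_mem_support]
    rintro ⟨m, hm, hm2⟩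
    rw [Finsupp.mem_support_iff] at hm2
    have hle := le_totalDegree hm
    have hm2le : m 2 ≤ f.totalDegree := by
      refine le_trans ?_ hle
      rw [Finsupp.sum_fintype _ _ (by simp), Fin.sum_univ_three]; omega
    have hc := congrArg (coeff (m - Finsupp.single 2 1)) h0
    have hmm : m - Finsupp.single 2 1 + Finsupp.single 2 1 = m := by
      apply tsub_add_cancel_of_le
      rw [Finsupp.single_le_iff]; omega
    rw [coeff_pderiv, hmm, coeff_zero] at hc
    have hcast : (((m - Finsupp.single 2 1 : Fin 3 →₀ ℕ) 2 : ℕ) : K) + 1 = ((m 2 : ℕ) : K) := by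
      rw [← Nat.cast_add_one]; congr 1
      simp; omega
    rcases mul_eq_zero.1 hc with h | h
    · exact (mem_support_iff.1 hm) h
    · rw [hcast, CharP.cast_eq_zero_iff K p] at h
      have := Nat.le_of_dvd (by omega) h
      omega
  have hcong : ∀ {S : Type _} [CommRing S] [Algebra K S] (g g' : Fin 3 → S), g 0 = g' 0 → g 1 = g' 1 →
      aeval g f = aeval g' f := by
    intro S _ _ g g' h0 h1
    rw [aeval_eq_eval₂Hom, aeval_eq_eval₂Hom]
    refine eval₂Hom_congr' rfl ?_ rfl
    intro i hi _
    fin_cases i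
    · exact h0
    · exact h1
    · exact absurd hi hv
  -- divide
  have hdvd : (X 1 - C w.1) ∣ f := by
    have e1 : aeval ![(X 0 : MvPolynomial (Fin 3) K), C w.1, X 2] f = 0 := by
      have h2 := congrArg (Polynomial.aeval (X 0 : MvPolynomial (Fin 3) K)) hw
      rw [L2, ← AlgHom.comp_apply, comp_aeval, map_zero] at h2
      rw [← h2]
      apply hcong
      · simp
      · simp [MvPolynomial.algebraMap_eq]
    have e2 : ∀ q : MvPolynomial (Fin 3) K, (X 1 - C w.1) ∣ q - aeval ![(X 0 : MvPolynomial (Fin 3) K), C w.1, X 2] q := by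
      intro q
      induction q using MvPolynomial.induction_on with
      | C a => simp [MvPolynomial.algebraMap_eq]
      | add a b ha hb => 
        rw [map_add, add_sub_add_comm]; exact dvd_add ha hb
      | mul_X a i ha =>
        have hi : (X 1 - C w.1) ∣ X i - (![(X 0 : MvPolynomial (Fin 3) K), C w.1, X 2] i) := by
          fin_cases i <;> simp
        rw [map_mul, aeval_X]
        have := dvd_add (ha.mul_right (X i)) (hi.mul_left (aeval ![(X 0 : MvPolynomial (Fin 3) K), C w.1, X 2] a))
        convert this using 1; ring
    have := e2 f
    rwa [e1, sub_zero] at this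
  obtain ⟨u, hu⟩ := hdvd
  rcases hf.isUnit_or_isUnit hu with h | h
  · exfalso
    have := h.map (L2 w)
    simp [L2] at this
  · have h3 := hw'
    rw [hu, map_mul] at h3
    have h4 := (h.map (L2 w')).ne_zero
    have h5 := (mul_eq_zero.1 h3).resolve_right h4
    simp [L2] at h5
    rw [sub_eq_zero] at h5
    exact (Polynomial.C_injective h5).symm

end Tri


section TriC
open MvPolynomial
variable {K : Type*} [Field K]

/-- flow polynomial -/
noncomputable def FlowP (f : MvPolynomial (Fin 3) K) : Polynomial (MvPolynomial (Fin 3) K) :=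
  aeval ![Polynomial.C (X 0), Polynomial.C (X 1) + Polynomial.C (pderiv 2 f) * Polynomial.X,
    Polynomial.C (X 2) - Polynomial.C (pderiv 1 f) * Polynomial.X] f

lemma flow_coeff_zero (f : MvPolynomial (Fin 3) K) : (FlowP f).coeff 0 = f := by
  rw [Polynomial.coeff_zero_eq_eval_zero]
  have h : ((Polynomial.aeval (R := MvPolynomial (Fin 3) K) (0 : MvPolynomial (Fin 3) K)).restrictScalars K) (FlowP f) = f := by
    rw [FlowP, ← AlgHom.comp_apply, comp_aeval]
    conv_rhs => rw [← aeval_X_left_apply f]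
    congr 2
    ext i
    fin_cases i <;> simp
  simpa using h

lemma flow_identity (f : MvPolynomial (Fin 3) K) (k : ℕ) :
    Phi f ∣ pderiv 2 f * Dop f ((FlowP f).coeff k) -
      (pderiv 2 f * ((k + 1 : ℕ) * (FlowP f).coeff (k+1)) + Dop f (pderiv 2 f) * (k * (FlowP f).coeff k)) := by
  set a := pderiv 2 f with ha
  set b := pderiv 1 f with hb
  set g : Fin 3 → Polynomial (MvPolynomial (Fin 3) K) := ![Polynomial.C (X 0), Polynomial.C (X 1) + Polynomial.C (pderiv 2 f) * Polynomial.X,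
    Polynomial.C (X 2) - Polynomial.C (pderiv 1 f) * Polynomial.X] with hg
  let DD : Derivation K (Polynomial (MvPolynomial (Fin 3) K)) (Polynomial (MvPolynomial (Fin 3) K)) :=
    (PolynomialModule.equivPolynomialSelf (R := MvPolynomial (Fin 3) K)).toLinearMap.compDer (Dop f).mapCoeffs
  have hDD : ∀ q n, (DD q).coeff n = Dop f (q.coeff n) := fun q n => rfl
  have hDC : ∀ c, DD (Polynomial.C c) = Polynomial.C (Dop f c) := by
    intro c; ext1 n; rw [hDD, Polynomial.coeff_C, Polynomial.coeff_C]; split_ifs <;> simp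
  have hDX : DD Polynomial.X = 0 := by
    ext1 n; rw [hDD, Polynomial.coeff_X]; split_ifs <;> simp
  have c1 := chain_rule DD g f
  have c2 := chain_rule ((Polynomial.derivative' (R := MvPolynomial (Fin 3) K)).restrictScalars K) g f
  have hx0 : Dop f (X 0) = 0 := by simp [Dop_apply]
  have hx1 : Dop f (X 1) = a := by simp [Dop_apply, ha]
  have hx2 : Dop f (X 2) = -b := by simp [Dop_apply, hb]
  have c1' : DD (FlowP f) = aeval g (pderiv 1 f) * (Polynomial.C a + Polynomial.C (Dop f a) * Polynomial.X)
      - aeval g (pderiv 2 f) * (Polynomial.C b + Polynomial.C (Dop f b) * Polynomial.X) := by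
    rw [FlowP, ← hg, c1, Fin.sum_univ_three]
    simp only [hg, Matrix.cons_val_zero, Matrix.cons_val_one, Matrix.cons_val, hDC, hDX, hx0, hx1, hx2, map_add, map_sub, Derivation.leibniz, smul_eq_mul, map_zero, map_neg]
    ring
  have c2' : Polynomial.derivative (FlowP f) = aeval g (pderiv 1 f) * Polynomial.C a - aeval g (pderiv 2 f) * Polynomial.C b := by
    have : Polynomial.derivative (FlowP f) = ((Polynomial.derivative' (R := MvPolynomial (Fin 3) K)).restrictScalars K) (aeval g f) := rfl
    rw [this, c2, Fin.sum_univ_three]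
    simp [hg, Polynomial.derivative'_apply]
    ring
  have key : Polynomial.C a * DD (FlowP f) - (Polynomial.C a * Polynomial.derivative (FlowP f) + Polynomial.C (Dop f a) * (Polynomial.derivative (FlowP f) * Polynomial.X)) 
      = Polynomial.C (Phi f) * (Polynomial.X * aeval g (pderiv 2 f)) := by
    rw [c1', c2', Phi, ← ha, ← hb]
    simp only [map_sub, map_mul]
    ring
  have h := congrArg (fun q => Polynomial.coeff q k) key
  simp only [Polynomial.coeff_sub, Polynomial.coeff_add, Polynomial.coeff_C_mul, hDD, Polynomial.coeff_derivative] at h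
  have hk : (Polynomial.derivative (FlowP f) * Polynomial.X).coeff k = k * (FlowP f).coeff k := by
    cases k with
    | zero => simp
    | succ k => rw [Polynomial.coeff_mul_X, Polynomial.coeff_derivative]; push_cast; ring
  rw [hk] at h
  refine ⟨(Polynomial.X * aeval g (pderiv 2 f)).coeff k, ?_⟩
  rw [← h]; push_cast; ring

lemma natDegree_CX {R : Type*} [CommRing R] (c : R) : (Polynomial.C c * Polynomial.X).natDegree ≤ 1 :=
  (Polynomial.natDegree_C_mul_le _ _).trans Polynomial.natDegree_X_le

lemma flow_dvd (p : ℕ) [CharP K p] (f : MvPolynomial (Fin 3) K) (hf : Irreducible f)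
    (hfp : f.totalDegree < p) (hΦ : f ∣ Phi f) (hd : ¬ f ∣ pderiv 2 f) (k : ℕ) :
    f ∣ (FlowP f).coeff k := by
  by_cases hkp : p ≤ k
  · have : (FlowP f).natDegree ≤ f.totalDegree := by
      apply natDegree_aeval_le
      intro i
      fin_cases i
      · simp
      · simp only [Fin.mk_one, Matrix.cons_val_one]
        exact Polynomial.natDegree_add_le_of_degree_le (by rw [Polynomial.natDegree_C]; omega) (natDegree_CX _)
      · simp only [Fin.reduceFinMk, Matrix.cons_val]
        exact (Polynomial.natDegree_sub_le _ _).trans (max_le (by rw [Polynomial.natDegree_C]; omega) (natDegree_CX _))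
    rw [Polynomial.coeff_eq_zero_of_natDegree_lt (by omega)]
    exact dvd_zero _
  push Not at hkp
  induction k with
  | zero => rw [flow_coeff_zero]
  | succ k ih =>
    have ih := ih (by omega)
    have h1 := hΦ.trans (flow_identity f k)
    have hD : f ∣ Dop f ((FlowP f).coeff k) := by
      obtain ⟨c, hc⟩ := ih
      rw [hc, Derivation.leibniz]
      have : Dop f f = 0 := by rw [Dop_apply]; ring
      rw [this]; simp
    have h2 : f ∣ pderiv 2 f * ((k + 1 : ℕ) * (FlowP f).coeff (k+1)) := by
      have h3 := (hD.mul_left (pderiv 2 f)).sub ((((ih.mul_left (k:MvPolynomial (Fin 3) K)).mul_left (Dop f (pderiv 2 f)))).add h1)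
      convert h3 using 1; ring
    have h3 := (hf.prime.dvd_or_dvd h2).resolve_left hd
    have hu : IsUnit ((k + 1 : ℕ) : MvPolynomial (Fin 3) K) := by
      rw [show ((k + 1 : ℕ) : MvPolynomial (Fin 3) K) = C ((k+1 : ℕ) : K) by simp]
      apply IsUnit.map
      rw [isUnit_iff_ne_zero, Ne, CharP.cast_eq_zero_iff K p]
      intro h
      have := Nat.le_of_dvd (by omega) h
      omega
    exact (hu.dvd_mul_left).1 h3

/-- polynomial in Z -/
noncomputable def inZ (q : Polynomial K) : MvPolynomial (Fin 3) K := Polynomial.aeval (X 0) q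

lemma L2_inZ (w : K × K × K) (q : Polynomial K) : L2 w (inZ q) = q := by
  rw [inZ, ← Polynomial.aeval_algHom_apply]
  simp [L2]

lemma L1_inZ (w : K × K × K) (q : Polynomial K) : L1 w (inZ q) = Polynomial.C (q.eval w.1) := by
  rw [inZ, ← Polynomial.aeval_algHom_apply]
  simp [L1, Polynomial.aeval_def, Polynomial.eval₂_eq_sum, Polynomial.eval_eq_sum, Polynomial.sum]

lemma tri_c_dvd (p : ℕ) [CharP K p] (f : MvPolynomial (Fin 3) K) (hf : Irreducible f)
    (hfp : f.totalDegree < p) (hΦ : f ∣ Phi f) (hd : ¬ f ∣ pderiv 2 f)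
    (w : K × K × K) (hw : L2 w f = 0) (hw0 : L2 w (pderiv 2 f) ≠ 0) :
    f ∣ inZ (L2 w (pderiv 2 f)) * (X 2 - inZ (Polynomial.C w.2.1 * Polynomial.X + Polynomial.C w.2.2))
      + inZ (L2 w (pderiv 1 f)) * (X 1 - C w.1) := by
  set a0 := L2 w (pderiv 2 f) with ha0
  set b0 := L2 w (pderiv 1 f) with hb0
  set η := Polynomial.C w.2.1 * Polynomial.X + Polynomial.C w.2.2 with hη
  set G := inZ a0 * (X 2 - inZ η) + inZ b0 * (X 1 - C w.1) with hG
  -- vanishing of psi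
  have hψ : aeval ![(Polynomial.C Polynomial.X : Polynomial (Polynomial K)), Polynomial.C (Polynomial.C w.1) + Polynomial.C a0 * Polynomial.X,
      Polynomial.C η - Polynomial.C b0 * Polynomial.X] f = 0 := by
    have h1 : Polynomial.mapAlgHom (L2 w) (FlowP f) = 0 := by
      ext1 k
      rw [Polynomial.coe_mapAlgHom, Polynomial.coeff_map, Polynomial.coeff_zero]
      obtain ⟨c, hc⟩ := flow_dvd p f hf hfp hΦ hd k
      rw [hc]
      simp [hw]
    rw [← h1, FlowP, ← AlgHom.comp_apply, comp_aeval]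
    congr 2
    ext1 i
    fin_cases i <;> simp [L2, ha0, hb0, hη]
  let Q := MvPolynomial (Fin 3) K ⧸ Ideal.span {G}
  let mk : MvPolynomial (Fin 3) K →ₐ[K] Q := Ideal.Quotient.mkₐ K _
  let L := Localization.Away (mk (inZ a0))
  let ι : Q →ₐ[K] L := IsScalarTower.toAlgHom K Q L
  let inv : L := IsLocalization.Away.invSelf (mk (inZ a0))
  have hinv : ι (mk (inZ a0)) * inv = 1 := IsLocalization.Away.mul_invSelf _
  let θ := ι.comp mk
  have hθG : θ G = 0 := by
    have : mk G = 0 := Ideal.Quotient.eq_zero_iff_mem.2 (Ideal.mem_span_singleton_self G)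
    simp [θ, this]
  have hθinv : θ (inZ a0) * inv = 1 := hinv
  have hθf : θ f = 0 := by
    let σ : L := θ (X 1 - C w.1) * inv
    have hh := congrArg (fun q => Polynomial.eval₂ ((θ.comp (Polynomial.aeval (X 0))).toRingHom) σ q) hψ
    let Ev : Polynomial (Polynomial K) →ₐ[K] L := 
      { Polynomial.eval₂RingHom ((θ.comp (Polynomial.aeval (X 0))).toRingHom) σ with
        commutes' := by intro r; simp [Polynomial.algebraMap_apply, MvPolynomial.algebraMap_eq]  }
    have hEC : ∀ q, Ev (Polynomial.C q) = θ (inZ q) := by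
      intro q
      change Polynomial.eval₂ _ _ _ = _
      rw [Polynomial.eval₂_C]; rfl
    have hEX : Ev Polynomial.X = σ := by
      change Polynomial.eval₂ _ _ _ = _
      rw [Polynomial.eval₂_X]
    have hE := congrArg Ev hψ
    rw [map_zero, ← AlgHom.comp_apply, comp_aeval] at hE
    rw [← hE]
    conv_lhs => rw [← aeval_X_left_apply f, ← AlgHom.comp_apply, comp_aeval]
    congr 2
    ext1 i
    have hX : inZ (Polynomial.X : Polynomial K) = X 0 := by simp [inZ]
    have hC : ∀ c : K, inZ (Polynomial.C c) = C c := by intro c; simp [inZ, MvPolynomial.algebraMap_eq]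
    fin_cases i
    · simp [hEC, hX]
    · simp only [Fin.mk_one, Matrix.cons_val_one, Matrix.cons_val_zero, map_add, map_mul, hEC, hEX, hC, σ, map_sub]
      linear_combination (-(θ (X 1) - θ (C w.1))) * hθinv
    · simp only [Fin.reduceFinMk, Matrix.cons_val, map_sub, map_mul, hEC, hEX, σ]
      have hθG' : θ (inZ a0 * (X 2 - inZ η) + inZ b0 * (X 1 - C w.1)) = 0 := hθG
      simp only [map_add, map_mul, map_sub] at hθG'
      linear_combination (-(θ (X 2) - θ (inZ η))) * hθinv + inv * hθG'
  have h3 : algebraMap Q L (mk f) = 0 := hθf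
  rw [IsLocalization.map_eq_zero_iff (Submonoid.powers (mk (inZ a0)))] at h3
  obtain ⟨⟨_, N, rfl⟩, hN⟩ := h3
  have h4 : mk (inZ a0 ^ N * f) = 0 := by rw [map_mul, map_pow]; exact hN
  have h5 : G ∣ inZ a0 ^ N * f := Ideal.mem_span_singleton.1 (Ideal.Quotient.eq_zero_iff_mem.1 h4)
  obtain ⟨q, hq⟩ := h5
  have h6 : f ∣ G * q := ⟨inZ a0 ^ N, by rw [← hq]; ring⟩
  refine (hf.prime.dvd_or_dvd h6).resolve_right ?_
  rintro ⟨q', rfl⟩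
  have h7 : inZ a0 ^ N = G * q' := by
    apply mul_left_cancel₀ hf.ne_zero; linear_combination hq
  have h8 := congrArg (L2 w) h7
  have h9 : L2 w G = 0 := by
    rw [hG]; simp only [map_add, map_mul, map_sub, L2_inZ]
    simp [L2, hη]
  rw [map_mul, h9, zero_mul, map_pow, L2_inZ] at h8
  exact hw0 (eq_zero_of_pow_eq_zero h8)

lemma trichotomy (p : ℕ) [CharP K p] (f : MvPolynomial (Fin 3) K) (hf : Irreducible f)
    (hfp : f.totalDegree < p) (X' Y' : Finset (K × K × K))
    (hX : Set.InjOn Prod.fst (X' : Set (K × K × K))) (hY : Set.InjOn Prod.fst (Y' : Set (K × K × K)))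
    (h1 : ∀ w ∈ X', L1 w f = 0) (h2 : ∀ w ∈ Y', L2 w f = 0) :
    X'.card ≤ 3 * f.totalDegree ^ 2 ∨ Y'.card ≤ 3 * f.totalDegree ^ 2 ∨
      ∃ e g c h : K, ∀ w ∈ X', w.2.1 = e * w.1 + g ∧ w.2.2 = c * w.1 + h := by
  have hpos := irr_deg_pos f hf
  by_cases hΦ : f ∣ Phi f
  swap
  · left
    refine (bezout_L1 f (Phi f) hf hΦ X' hX h1 (fun w hw => L1_Phi w f (h1 w hw))).trans ?_
    have := Nat.mul_le_mul_left f.totalDegree (Phi_degree f)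
    nlinarith
  by_cases hd : f ∣ pderiv 2 f
  · right; left
    have : Y'.card ≤ 1 := by
      rw [Finset.card_le_one]
      intro a ha b hb
      exact hY ha hb (tri_d p f hf hfp hd a b (h2 a ha) (h2 b hb))
    nlinarith
  by_cases hall : ∀ w ∈ Y', L2 w (pderiv 2 f) = 0
  · right; left
    refine (bezout_L2 f (pderiv 2 f) hf hd Y' hY h2 hall).trans ?_
    have h5 := totalDegree_pderiv_le 2 f
    have := Nat.mul_le_mul_left f.totalDegree (h5.trans (Nat.sub_le _ _))
    nlinarith
  push Not at hall
  obtain ⟨y0, hy0, hy0'⟩ := hall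
  by_cases hone : ∀ y ∈ Y', y = y0
  · right; left
    have : Y'.card ≤ 1 := by
      rw [Finset.card_le_one]
      intro a ha b hb
      rw [hone a ha, hone b hb]
    nlinarith
  push Not at hone
  obtain ⟨y1, hy1, hne⟩ := hone
  right; right
  have ht : y1.1 - y0.1 ≠ 0 := by
    intro h; exact hne (hY hy1 hy0 (sub_eq_zero.1 h))
  have hG := tri_c_dvd p f hf hfp hΦ hd y0 (h2 y0 hy0) hy0'
  set a0 := L2 y0 (pderiv 2 f) with ha0
  set b0 := L2 y0 (pderiv 1 f) with hb0
  set η0 := Polynomial.C y0.2.1 * Polynomial.X + Polynomial.C y0.2.2 with hη0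
  set η1 := Polynomial.C y1.2.1 * Polynomial.X + Polynomial.C y1.2.2 with hη1
  have e1 : a0 * (η1 - η0) + b0 * (Polynomial.C (y1.1 - y0.1)) = 0 := by
    obtain ⟨q, hq⟩ := hG
    have := congrArg (L2 y1) hq
    rw [map_mul, h2 y1 hy1, zero_mul] at this
    simp only [map_add, map_mul, map_sub, L2_inZ] at this
    rw [← this]
    simp [L2, hη1]
  have hB : f ∣ inZ a0 * (C (y1.1 - y0.1) * (X 2 - inZ η0) - inZ (η1 - η0) * (X 1 - C y0.1)) := by
    have e2 := congrArg (inZ (K := K)) e1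
    simp only [inZ, map_add, map_mul, map_zero, Polynomial.aeval_C, MvPolynomial.algebraMap_eq] at e2
    have := hG.mul_left (C (y1.1 - y0.1))
    convert this using 1
    simp only [inZ]
    linear_combination (-(X 1 - C y0.1)) * e2
  have hB2 := (hf.prime.dvd_or_dvd hB).resolve_left (by
    rintro ⟨q, hq⟩
    have := congrArg (L2 y0) hq
    rw [L2_inZ, map_mul, h2 y0 hy0, zero_mul] at this
    exact hy0' this)
  have key : ∀ w ∈ X', (y1.1 - y0.1) * w.2.1 = (y1.2.1 - y0.2.1) * w.1 + (y1.2.2 - y0.2.2) ∧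
      (y1.1 - y0.1) * (w.2.2 - (y0.2.1 * w.1 + y0.2.2)) + ((y1.2.1 - y0.2.1) * w.1 + (y1.2.2 - y0.2.2)) * y0.1 = 0 := by
    intro w hw
    obtain ⟨q, hq⟩ := hB2
    have := congrArg (L1 w) hq
    rw [map_mul, h1 w hw, zero_mul] at this
    simp only [map_mul, map_sub, L1_inZ] at this
    have hX2 : L1 w (X 2) = Polynomial.C w.2.1 * Polynomial.X + Polynomial.C w.2.2 := by simp [L1]
    have hX1 : L1 w (X 1) = Polynomial.X := by simp [L1]
    have hC : ∀ c, L1 w (C c) = Polynomial.C c := by intro c; simp [L1]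
    rw [hX2, hX1, hC, hC] at this
    simp only [hη1, hη0] at this
    have c0 := congrArg (Polynomial.eval 0) this
    have c1 := congrArg (Polynomial.eval 1) this
    simp at c0 c1
    constructor
    · linear_combination c1 - c0
    · linear_combination c0
  refine ⟨(y1.2.1 - y0.2.1) / (y1.1 - y0.1), (y1.2.2 - y0.2.2) / (y1.1 - y0.1),
    y0.2.1 - (y1.2.1 - y0.2.1) / (y1.1 - y0.1) * y0.1, y0.2.2 - (y1.2.2 - y0.2.2) / (y1.1 - y0.1) * y0.1, ?_⟩
  intro w hw
  obtain ⟨k1, k2⟩ := key w hw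
  constructor
  · field_simp; linear_combination k1
  · field_simp; linear_combination k2

end TriC


section Incid
open MvPolynomial
open scoped Classical
variable {K : Type*} [Field K]

/-- incidence relation -/
def incr (w w' : K × K × K) : Prop := w.2.1 * w'.1 + w.2.2 = w'.2.1 * w.1 + w'.2.2

lemma incr_symm (w w' : K × K × K) : incr w w' ↔ incr w' w := by
  unfold incr; exact eq_comm

/-- number of incidences -/
noncomputable def Inum (X Y : Finset (K × K × K)) : ℕ := ∑ x ∈ X, (Y.filter fun y => incr x y).card

lemma Inum_swap (X Y : Finset (K × K × K)) : Inum X Y = ∑ y ∈ Y, (X.filter fun x => incr x y).card :=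
  Finset.sum_card_bipartiteAbove_eq_sum_card_bipartiteBelow _

lemma Inum_comm (X Y : Finset (K × K × K)) : Inum X Y = Inum Y X := by
  rw [Inum_swap, Inum]
  simp only [incr_symm]

lemma eval_incr (w w' : K × K × K) (h : incr w w') (f : MvPolynomial (Fin 3) K) :
    Polynomial.eval w'.1 (L1 w f) = Polynomial.eval w.1 (L2 w' f) := by
  have e1 : (Polynomial.aeval (R := K) w'.1).comp (L1 w) = aeval ![w.1, w'.1, w.2.1 * w'.1 + w.2.2] := by
    rw [L1, comp_aeval]; congr 1; ext i; fin_cases i <;> simp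
  have e2 : (Polynomial.aeval (R := K) w.1).comp (L2 w') = aeval ![w.1, w'.1, w.2.1 * w'.1 + w.2.2] := by
    unfold incr at h
    rw [L2, comp_aeval, h]; congr 1; ext i; fin_cases i <;> simp
  have := congrArg (fun φ => φ f) (e1.trans e2.symm)
  simpa using this

lemma natDegree_L1 (w : K × K × K) (f : MvPolynomial (Fin 3) K) : (L1 w f).natDegree ≤ f.totalDegree := by
  apply natDegree_aeval_le
  intro i
  fin_cases i
  · simp
  · simp
  · exact Polynomial.natDegree_add_le_of_degree_le (natDegree_CX _) (by rw [Polynomial.natDegree_C]; omega) 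

lemma natDegree_L2 (w : K × K × K) (f : MvPolynomial (Fin 3) K) : (L2 w f).natDegree ≤ f.totalDegree := by
  apply natDegree_aeval_le
  intro i
  fin_cases i
  · simp
  · simp
  · exact Polynomial.natDegree_add_le_of_degree_le (natDegree_CX _) (by rw [Polynomial.natDegree_C]; omega) 

lemma card_le_of_roots (q : Polynomial K) (hq : q ≠ 0) (S : Finset (K × K × K))
    (hS : Set.InjOn Prod.fst (S : Set (K × K × K))) (h : ∀ w ∈ S, q.eval w.1 = 0) : S.card ≤ q.natDegree := by
  rw [← Finset.card_image_of_injOn hS]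
  refine (Finset.card_le_card (t := q.roots.toFinset) ?_).trans ((Multiset.toFinset_card_le _).trans (Polynomial.card_roots' _))
  intro x hx
  rw [Finset.mem_image] at hx
  obtain ⟨w, hw, rfl⟩ := hx
  rw [Multiset.mem_toFinset, Polynomial.mem_roots hq]
  exact h w hw

lemma interpolation (S : Finset (K × K × K)) (d : ℕ) (h : S.card * (d + 1) < (d + 3).choose 3) :
    ∃ f : MvPolynomial (Fin 3) K, f ≠ 0 ∧ f.totalDegree ≤ d ∧ ∀ w ∈ S, L1 w f = 0 := by
  let T : restrictTotalDegree (Fin 3) K d →ₗ[K] (S × Fin (d+1) → K) :=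
    LinearMap.pi fun q => (Polynomial.lcoeff K (q.2 : ℕ)).comp ((L1 q.1.1).toLinearMap.comp (Submodule.subtype _))
  have hk : LinearMap.ker T ≠ ⊥ := by
    apply LinearMap.ker_ne_bot_of_finrank_lt
    rw [finrank_rtd]
    simpa using h
  obtain ⟨f, hf, hf0⟩ := (Submodule.ne_bot_iff _).1 hk
  refine ⟨f.1, fun h => hf0 (Subtype.ext h), (mem_restrictTotalDegree _ _ _).1 f.2, ?_⟩
  intro w hw
  have hdeg := (natDegree_L1 w f.1).trans ((mem_restrictTotalDegree _ _ _).1 f.2)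
  ext k
  by_cases hkd : k < d + 1
  · have := congrFun (LinearMap.mem_ker.1 hf) (⟨w, hw⟩, ⟨k, hkd⟩)
    simpa [T] using this
  · rw [Polynomial.coeff_eq_zero_of_natDegree_lt (by omega)]; simp

lemma Inum_le_mul_right (X Y : Finset (K × K × K)) (e : ℕ) (h : ∀ y ∈ Y, (X.filter fun x => incr x y).card ≤ e) :
    Inum X Y ≤ e * Y.card := by
  rw [Inum_swap]
  refine (Finset.sum_le_sum h).trans ?_
  simp [mul_comm]

lemma Inum_le_mul_left (X Y : Finset (K × K × K)) (e : ℕ) (h : ∀ x ∈ X, (Y.filter fun y => incr x y).card ≤ e) :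
    Inum X Y ≤ e * X.card := by
  refine (Finset.sum_le_sum h).trans ?_
  simp [mul_comm]

lemma Inum_split_left (X Y : Finset (K × K × K)) (P : K × K × K → Prop) :
    Inum X Y = Inum (X.filter P) Y + Inum (X.filter fun x => ¬ P x) Y :=
  (Finset.sum_filter_add_sum_filter_not X P _).symm

lemma Inum_split_right (X Y : Finset (K × K × K)) (P : K × K × K → Prop) :
    Inum X Y = Inum X (Y.filter P) + Inum X (Y.filter fun x => ¬ P x) := by
  rw [Inum_comm, Inum_split_left Y X P, Inum_comm X, Inum_comm X]

lemma decomposition (X0 Y0 : Finset (K × K × K)) (hX : Set.InjOn Prod.fst (X0 : Set (K × K × K)))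
    (hY : Set.InjOn Prod.fst (Y0 : Set (K × K × K))) (d : ℕ) (Λ κ : ℝ)
    (H : ∀ g : MvPolynomial (Fin 3) K, Irreducible g → g.totalDegree ≤ d → ∀ X' ⊆ X0, ∀ Y' ⊆ Y0,
      (∀ w ∈ X', L1 w g = 0) → (∀ w ∈ Y', L2 w g = 0) →
      (Inum X' Y' : ℝ) ≤ g.totalDegree * Λ + κ * (X'.card + Y'.card))
    (f : MvPolynomial (Fin 3) K) : f ≠ 0 → f.totalDegree ≤ d → ∀ X' ⊆ X0, ∀ Y' ⊆ Y0,
      (∀ w ∈ X', L1 w f = 0) → (∀ w ∈ Y', L2 w f = 0) →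
      (Inum X' Y' : ℝ) ≤ f.totalDegree * (Λ + X0.card + Y0.card) + κ * (X'.card + Y'.card) := by
  induction f using WfDvdMonoid.induction_on_irreducible with
  | zero => intro h; exact absurd rfl h
  | unit u hu =>
    intro _ _ X' _ Y' _ h1 h2
    have hX' : X' = ∅ := by
      rw [Finset.eq_empty_iff_forall_notMem]; intro w hw
      exact (hu.map (L1 w)).ne_zero (h1 w hw)
    have hY' : Y' = ∅ := by
      rw [Finset.eq_empty_iff_forall_notMem]; intro w hw
      exact (hu.map (L2 w)).ne_zero (h2 w hw)
    have hd : u.totalDegree = 0 := (isUnit_iff_totalDegree_of_isReduced.1 hu).2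
    subst hX' hY'
    simp [Inum, hd]
  | mul h g hh hg ih =>
    intro hne hdeg X' hX' Y' hY' h1 h2
    rw [totalDegree_mul_of_isDomain hg.ne_zero hh] at hdeg ⊢
    set Xg := X'.filter fun w => L1 w g = 0 with hXg
    set Xr := X'.filter fun w => ¬ L1 w g = 0 with hXr
    set Yg := Y'.filter fun w => L2 w g = 0 with hYg
    set Yr := Y'.filter fun w => ¬ L2 w g = 0 with hYr
    have hXgs : Xg ⊆ X0 := (Finset.filter_subset _ _).trans hX'
    have hXrs : Xr ⊆ X0 := (Finset.filter_subset _ _).trans hX'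
    have hYgs : Yg ⊆ Y0 := (Finset.filter_subset _ _).trans hY'
    have hYrs : Yr ⊆ Y0 := (Finset.filter_subset _ _).trans hY'
    have i1 := H g hg (by omega) Xg hXgs Yg hYgs (fun w hw => (Finset.mem_filter.1 hw).2) (fun w hw => (Finset.mem_filter.1 hw).2)
    have i2 := ih hh (by omega) Xr hXrs Yr hYrs
      (fun w hw => by
        have := h1 w (Finset.mem_filter.1 hw).1
        rw [map_mul] at this
        exact (mul_eq_zero.1 this).resolve_left (Finset.mem_filter.1 hw).2)
      (fun w hw => by
        have := h2 w (Finset.mem_filter.1 hw).1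
        rw [map_mul] at this
        exact (mul_eq_zero.1 this).resolve_left (Finset.mem_filter.1 hw).2)
    have i3 : Inum Xg Yr ≤ g.totalDegree * Yr.card := by
      apply Inum_le_mul_right
      intro y hy
      refine (card_le_of_roots (L2 y g) (Finset.mem_filter.1 hy).2 _ ?_ ?_).trans (natDegree_L2 _ _)
      · exact hX.mono (by exact_mod_cast (Finset.filter_subset _ _).trans hXgs)
      · intro x hx
        rw [Finset.mem_filter] at hx
        rw [← eval_incr x y hx.2, (Finset.mem_filter.1 hx.1).2]; simp
    have i4 : Inum Xr Yg ≤ g.totalDegree * Xr.card := by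
      apply Inum_le_mul_left
      intro x hx
      refine (card_le_of_roots (L1 x g) (Finset.mem_filter.1 hx).2 _ ?_ ?_).trans (natDegree_L1 _ _)
      · exact hY.mono (by exact_mod_cast (Finset.filter_subset _ _).trans hYgs)
      · intro y hy
        rw [Finset.mem_filter] at hy
        rw [eval_incr x y hy.2, (Finset.mem_filter.1 hy.1).2]; simp
    have hsum : Inum X' Y' = Inum Xg Yg + Inum Xg Yr + (Inum Xr Yg + Inum Xr Yr) := by
      have e1 : Inum X' Y' = Inum Xg Y' + Inum Xr Y' := by
        convert Inum_split_left X' Y' (fun w => L1 w g = 0)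
      have e2 : Inum Xg Y' = Inum Xg Yg + Inum Xg Yr := by
        convert Inum_split_right Xg Y' (fun w => L2 w g = 0)
      have e3 : Inum Xr Y' = Inum Xr Yg + Inum Xr Yr := by
        convert Inum_split_right Xr Y' (fun w => L2 w g = 0)
      rw [e1, e2, e3]
    have cX : X'.card = Xg.card + Xr.card := (Finset.card_filter_add_card_filter_not _).symm
    have cY : Y'.card = Yg.card + Yr.card := (Finset.card_filter_add_card_filter_not _).symm
    have j3 : (Inum Xg Yr : ℝ) ≤ g.totalDegree * Y0.card := by
      exact_mod_cast i3.trans (Nat.mul_le_mul_left _ (Finset.card_le_card hYrs))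
    have j4 : (Inum Xr Yg : ℝ) ≤ g.totalDegree * X0.card := by
      exact_mod_cast i4.trans (Nat.mul_le_mul_left _ (Finset.card_le_card hXrs))
    rw [hsum, cX, cY]
    push_cast
    nlinarith

end Incid


section Sampling
open scoped Classical
variable {α : Type*} 

/-- weight -/
noncomputable def wt (r : α → α → Prop) (d : ℕ) (S : Finset α) (y : α) : ℝ :=
  if (S.filter fun x => r x y).card ≤ d then (1/2 : ℝ) ^ (S.filter fun x => r x y).card else 0

lemma wt_nonneg (r : α → α → Prop) (d : ℕ) (S : Finset α) (y : α) : 0 ≤ wt r d S y := by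
  unfold wt; split_ifs <;> positivity

lemma wt_insert_half (r : α → α → Prop) (d : ℕ) (S : Finset α) (x y : α) (hx : x ∉ S) (h : r x y) :
    wt r d (insert x S) y ≤ wt r d S y / 2 := by
  have hc : ((insert x S).filter fun x => r x y).card = (S.filter fun x => r x y).card + 1 := by
    rw [Finset.filter_insert, if_pos h, Finset.card_insert_of_notMem (by simp [hx])]
  unfold wt
  rw [hc]
  split_ifs with h1 h2 h2
  · rw [pow_succ]; linarith
  · omega
  · positivity
  · simp

lemma wt_insert_le (r : α → α → Prop) (d : ℕ) (S : Finset α) (x y : α) :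
    wt r d (insert x S) y ≤ wt r d S y := by
  by_cases hx : x ∈ S
  · rw [Finset.insert_eq_of_mem hx]
  by_cases h : r x y
  · have := wt_insert_half r d S x y hx h
    have := wt_nonneg r d S y
    linarith
  · unfold wt
    rw [Finset.filter_insert, if_neg h]

lemma samp_step (r : α → α → Prop) (d : ℕ) (D : ℝ) (X Y S : Finset α) (hX : X.Nonempty)
    (hD : ∀ y ∈ Y, D ≤ (X.filter fun x => r x y).card) :
    ∃ x ∈ X, ∑ y ∈ Y, wt r d (insert x S) y ≤ (1 - (D - d) / (2 * X.card)) * ∑ y ∈ Y, wt r d S y := by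
  by_contra hcon
  push Not at hcon
  have hm : (0:ℝ) < X.card := by exact_mod_cast hX.card_pos
  have h1 := Finset.sum_lt_sum_of_nonempty hX hcon
  rw [Finset.sum_const, nsmul_eq_mul, Finset.sum_comm] at h1
  have h2 : ∀ y ∈ Y, ∑ x ∈ X, wt r d (insert x S) y ≤ (X.card - (D - d)/2) * wt r d S y := by
    intro y hy
    by_cases hle : (S.filter fun x => r x y).card ≤ d
    swap
    · have h0 : wt r d S y = 0 := by unfold wt; rw [if_neg hle]
      rw [h0, mul_zero]
      apply Finset.sum_nonpos
      intro x _
      exact (wt_insert_le r d S x y).trans h0.le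
    have hcard : (D - d) ≤ (X.filter fun x => r x y ∧ x ∉ S).card := by
      have h3 : (X.filter fun x => r x y).card ≤ (X.filter fun x => r x y ∧ x ∉ S).card + (S.filter fun x => r x y).card := by
        refine (Finset.card_le_card ?_).trans (Finset.card_union_le _ _)
        intro x hx
        rw [Finset.mem_filter] at hx
        rw [Finset.mem_union, Finset.mem_filter, Finset.mem_filter]
        tauto
      have h4 := hD y hy
      have h5 : ((X.filter fun x => r x y).card : ℝ) ≤ (X.filter fun x => r x y ∧ x ∉ S).card + d := by
        exact_mod_cast h3.trans (by omega)
      linarith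
    have h6 : ∀ x ∈ X, wt r d (insert x S) y ≤ wt r d S y - (if r x y ∧ x ∉ S then wt r d S y / 2 else 0) := by
      intro x _
      split_ifs with h
      · have := wt_insert_half r d S x y h.2 h.1; linarith
      · have := wt_insert_le r d S x y; linarith
    refine (Finset.sum_le_sum h6).trans ?_
    rw [Finset.sum_sub_distrib, Finset.sum_const, nsmul_eq_mul, ← Finset.sum_filter, Finset.sum_const, nsmul_eq_mul]
    have := wt_nonneg r d S y
    nlinarith
  have h3 := Finset.sum_le_sum h2
  rw [← Finset.mul_sum] at h3
  have h4 : (X.card : ℝ) * ((1 - (D - d) / (2 * X.card)) * ∑ y ∈ Y, wt r d S y) = (X.card - (D - d)/2) * ∑ y ∈ Y, wt r d S y := by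
    field_simp
  linarith

lemma sampling (r : α → α → Prop) (d R : ℕ) (D : ℝ) (X Y : Finset α) (hX : X.Nonempty)
    (hD : ∀ y ∈ Y, D ≤ (X.filter fun x => r x y).card) (hDm : (D - d) ≤ 2 * X.card)
    (h : (Y.card : ℝ) * (1 - (D - d) / (2 * X.card)) ^ R < (1/2)^d) :
    ∃ S ⊆ X, S.card ≤ R ∧ ∀ y ∈ Y, d < (S.filter fun x => r x y).card := by
  have hm : (0:ℝ) < X.card := by exact_mod_cast hX.card_pos
  have hθ : 0 ≤ 1 - (D - d) / (2 * X.card) := by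
    rw [sub_nonneg, div_le_one (by positivity)]; exact hDm
  have main : ∀ R : ℕ, ∃ S ⊆ X, S.card ≤ R ∧ ∑ y ∈ Y, wt r d S y ≤ Y.card * (1 - (D - d) / (2 * X.card)) ^ R := by
    intro R
    induction R with
    | zero => refine ⟨∅, by simp, by simp, by simp [wt]⟩
    | succ R ih =>
      obtain ⟨S, hS, hSc, hw⟩ := ih
      obtain ⟨x, hx, hxw⟩ := samp_step r d D X Y S hX hD
      refine ⟨insert x S, Finset.insert_subset hx hS, (Finset.card_insert_le _ _).trans (by omega), hxw.trans ?_⟩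
      have := mul_le_mul_of_nonneg_left hw hθ
      rw [pow_succ]; linarith
  obtain ⟨S, hS, hSc, hw⟩ := main R
  refine ⟨S, hS, hSc, ?_⟩
  intro y hy
  by_contra hle
  push Not at hle
  have h1 : wt r d S y ≤ ∑ y ∈ Y, wt r d S y := Finset.single_le_sum (f := fun y => wt r d S y) (fun y _ => wt_nonneg r d S y) hy
  have h2 : (1/2:ℝ)^d ≤ wt r d S y := by
    unfold wt; rw [if_pos hle]
    exact pow_le_pow_of_le_one (by norm_num) (by norm_num) hle
  linarith

end Sampling


section Core
open MvPolynomial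
open scoped Classical

lemma samp_numeric (s : ℝ) (m n d R : ℕ) (hs : s ^ 2 = m) (hsA : 2 ^ 20 ≤ s) (hn : n ≤ m ^ 2)
    (hd : (d : ℝ) ≤ s / 16) (hd2 : s / 32 ≤ d) (hR : d ^ 2 ≤ 6 * R)
    (hDm : 2 ^ 20 * s - d ≤ 2 * m) :
    (n : ℝ) * (1 - (2 ^ 20 * s - d) / (2 * m)) ^ R < (1/2)^d := by
  have hs0 : 0 < s := by linarith
  have hm : (0:ℝ) < m := by rw [← hs]; positivity
  set θ := (2 ^ 20 * s - d) / (2 * (m:ℝ)) with hθ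
  have hθ1 : 0 ≤ 1 - θ := by rw [sub_nonneg, hθ, div_le_one (by positivity)]; exact hDm
  have hθ2 : 2 ^ 18 / s ≤ θ := by
    rw [hθ, div_le_div_iff₀ hs0 (by positivity), ← hs]
    nlinarith
  have h1 : (1 - θ) ^ R ≤ Real.exp (-(R * θ)) := by
    have := pow_le_pow_left₀ hθ1 (Real.one_sub_le_exp_neg θ) R
    rwa [← Real.exp_nat_mul, mul_neg] at this
  have h2 : (n:ℝ) ≤ Real.exp (4 * s) := by
    have h3 : s ≤ Real.exp s := by have := Real.add_one_le_exp s; linarith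
    have h4 := pow_le_pow_left₀ hs0.le h3 4
    rw [← Real.exp_nat_mul] at h4
    have h5 : (n:ℝ) ≤ (m:ℝ)^2 := by exact_mod_cast hn
    rw [← hs] at h5
    push_cast at h4
    linarith [show (s^2)^2 = s^4 by ring]
  have h6 : Real.exp (-(d:ℝ)) ≤ (1/2)^d := by
    have h7 : Real.exp (-1) ≤ 1/2 := by
      rw [Real.exp_neg, one_div]
      apply inv_anti₀ (by norm_num)
      have := Real.add_one_le_exp (1:ℝ); linarith
    have h8 := pow_le_pow_left₀ (Real.exp_pos _).le h7 d
    rw [← Real.exp_nat_mul] at h8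
    simpa using h8
  have h9 : 4 * s + d < R * θ := by
    have hR' : (d:ℝ)^2 ≤ 6 * R := by exact_mod_cast hR
    have hd3 : s^2 / 1024 ≤ (d:ℝ)^2 := by
      have := pow_le_pow_left₀ (by positivity) hd2 2
      linarith [show (s/32)^2 = s^2/1024 by ring]
    have hR2 : s^2 / 6144 ≤ R := by linarith
    have : s^2/6144 * (2^18 / s) ≤ R * θ := mul_le_mul hR2 hθ2 (by positivity) (by positivity)
    have h10 : s^2/6144 * (2^18 / s) = s * (2^18 / 6144) := by field_simp
    rw [h10] at this
    linarith
  calc (n:ℝ) * (1 - θ)^R ≤ Real.exp (4*s) * Real.exp (-(R*θ)) :=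
        mul_le_mul h2 h1 (pow_nonneg hθ1 _) (Real.exp_pos _).le
    _ = Real.exp (4*s - R*θ) := by rw [← Real.exp_add]; ring_nf
    _ < Real.exp (-(d:ℝ)) := by apply Real.exp_lt_exp.2; linarith
    _ ≤ _ := h6

variable {K : Type*} [Field K]

/-- kappa condition -/
def kc (κ : ℝ) (X : Finset (K × K × K)) : Prop := ∀ e g c h : K,
  ((X.filter fun w => w.2.1 = e * w.1 + g ∧ w.2.2 = c * w.1 + h).card : ℝ) ≤ κ

lemma kc_mono (κ : ℝ) (X X' : Finset (K × K × K)) (h : X' ⊆ X) (hX : kc κ X) : kc κ X' := by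
  intro e g c k
  refine le_trans ?_ (hX e g c k)
  exact_mod_cast Finset.card_le_card (Finset.filter_subset_filter _ h)

lemma codeg (κ : ℝ) (Y : Finset (K × K × K)) (hY : kc κ Y) (x x' : K × K × K) (h : x.1 ≠ x'.1) :
    ((Y.filter fun y => incr x y ∧ incr x' y).card : ℝ) ≤ κ := by
  have hne : x.1 - x'.1 ≠ 0 := sub_ne_zero.2 h
  refine le_trans ?_ (hY ((x.2.1 - x'.2.1) / (x.1 - x'.1)) ((x.2.2 - x'.2.2) / (x.1 - x'.1))
    (x.2.1 - (x.2.1 - x'.2.1) / (x.1 - x'.1) * x.1) (x.2.2 - (x.2.2 - x'.2.2) / (x.1 - x'.1) * x.1))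
  norm_cast
  apply Finset.card_le_card
  intro y hy
  rw [Finset.mem_filter] at hy ⊢
  obtain ⟨hy, h1, h2⟩ := hy
  unfold incr at h1 h2
  refine ⟨hy, ?_, ?_⟩
  · field_simp
    linear_combination h2 - h1
  · field_simp
    linear_combination (-x.1) * h2 + x'.1 * h1

lemma dcount (κ : ℝ) (hκ : 1 ≤ κ) (X Y : Finset (K × K × K))
    (hX : Set.InjOn Prod.fst (X : Set (K × K × K))) (hY : kc κ Y)
    (hdeg : ∀ y ∈ Y, κ + 1 ≤ (X.filter fun x => incr x y).card) : Y.card ≤ X.card ^ 2 := by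
  have h1 : ∑ y ∈ Y, (X.offDiag.filter fun q => incr q.1 y ∧ incr q.2 y).card =
      ∑ q ∈ X.offDiag, (Y.filter fun y => incr q.1 y ∧ incr q.2 y).card :=
    (Finset.sum_card_bipartiteAbove_eq_sum_card_bipartiteBelow
      (fun (q : (K × K × K) × (K × K × K)) y => incr q.1 y ∧ incr q.2 y)).symm
  have h2 : ∀ y ∈ Y, κ ≤ ((X.offDiag.filter fun q => incr q.1 y ∧ incr q.2 y).card : ℝ) := by
    intro y hy
    have h3 : X.offDiag.filter (fun q => incr q.1 y ∧ incr q.2 y) = (X.filter fun x => incr x y).offDiag := by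
      ext q; simp only [Finset.mem_filter, Finset.mem_offDiag]; tauto
    have hd := hdeg y hy
    rw [h3, Finset.offDiag_card, Nat.cast_sub (Nat.le_mul_self _)]
    push_cast
    nlinarith
  have h4 : (∑ q ∈ X.offDiag, ((Y.filter fun y => incr q.1 y ∧ incr q.2 y).card : ℝ)) ≤ X.card ^ 2 * κ := by
    refine (Finset.sum_le_sum (g := fun _ => κ) ?_).trans ?_
    · intro q hq
      rw [Finset.mem_offDiag] at hq
      exact codeg κ Y hY q.1 q.2 (fun h => hq.2.2 (hX hq.1 hq.2.1 h))
    · rw [Finset.sum_const, nsmul_eq_mul]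
      gcongr
      rw [Finset.offDiag_card]
      have : ((X.card * X.card - X.card : ℕ) : ℝ) ≤ (X.card * X.card : ℕ) := by exact_mod_cast Nat.sub_le _ _
      push_cast at this ⊢
      nlinarith
  have h5 := Finset.sum_le_sum h2
  rw [Finset.sum_const, nsmul_eq_mul] at h5
  have h6 : (∑ y ∈ Y, ((X.offDiag.filter fun q => incr q.1 y ∧ incr q.2 y).card : ℝ)) =
    ∑ q ∈ X.offDiag, ((Y.filter fun y => incr q.1 y ∧ incr q.2 y).card : ℝ) := by exact_mod_cast h1
  rw [h6] at h5
  have h7 : (Y.card : ℝ) * κ ≤ X.card ^ 2 * κ := h5.trans h4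
  have h8 := le_of_mul_le_mul_right h7 (by linarith)
  exact_mod_cast h8

/-- target bound -/
noncomputable def bd (κ : ℝ) (m n : ℕ) : ℝ := 2 ^ 20 * (m * √n + n * √m) + κ * (m + n)

lemma bd_comm (κ : ℝ) (m n : ℕ) : bd κ m n = bd κ n m := by unfold bd; ring

set_option maxHeartbeats 1000000 in
lemma core_step (p : ℕ) [CharP K p] (hp : 0 < p) (κ : ℝ) (hκ : 1 ≤ κ) (X Y : Finset (K × K × K))
    (hX : Set.InjOn Prod.fst (X : Set (K × K × K))) (hY : Set.InjOn Prod.fst (Y : Set (K × K × K)))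
    (kX : kc κ X) (kY : kc κ Y) (hmp : X.card ≤ p ^ 2) (hmn : X.card ≤ Y.card)
    (IH : ∀ X' ⊆ X, ∀ Y' ⊆ Y, X'.card + Y'.card < X.card + Y.card →
      (Inum X' Y' : ℝ) ≤ bd κ X'.card Y'.card) :
    (Inum X Y : ℝ) ≤ bd κ X.card Y.card := by
  obtain ⟨m, hm⟩ : ∃ m, m = X.card := ⟨_, rfl⟩
  obtain ⟨n, hn⟩ : ∃ n, n = Y.card := ⟨_, rfl⟩
  rw [← hm] at hmp hmn IH ⊢
  rw [← hn] at hmn IH ⊢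
  obtain ⟨s, hs⟩ : ∃ s, s = √(m:ℝ) := ⟨_, rfl⟩
  obtain ⟨t, ht⟩ : ∃ t, t = √(n:ℝ) := ⟨_, rfl⟩
  have hs0 : 0 ≤ s := hs ▸ Real.sqrt_nonneg _
  have ht0 : 0 ≤ t := ht ▸ Real.sqrt_nonneg _
  have hs2 : s ^ 2 = m := by rw [hs, Real.sq_sqrt (Nat.cast_nonneg _)]
  have ht2 : t ^ 2 = n := by rw [ht, Real.sq_sqrt (Nat.cast_nonneg _)]
  have hst : s ≤ t := by rw [hs, ht]; exact Real.sqrt_le_sqrt (by exact_mod_cast hmn)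
  have hbd : bd κ m n = 2 ^ 20 * (m * t + n * s) + κ * (m + n) := by rw [bd, ← hs, ← ht]
  rcases Nat.eq_zero_or_pos m with hm0 | hmpos
  · have : X = ∅ := by rw [← Finset.card_eq_zero]; omega
    subst this
    simp only [Inum, Finset.sum_empty, Nat.cast_zero]
    rw [hbd]; positivity
  have hXne : X.Nonempty := by rw [← Finset.card_pos]; omega
  have hYne : Y.Nonempty := by rw [← Finset.card_pos]; omega
  by_cases hA : ∃ y ∈ Y, ((X.filter fun x => incr x y).card : ℝ) ≤ κ + 2 ^ 20 * s
  · obtain ⟨y, hy, hdy⟩ := hA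
    have hce := Finset.card_erase_of_mem hy
    have ih := IH X (subset_refl _) (Y.erase y) (Finset.erase_subset _ _) (by omega)
    have hsum : Inum X Y = (X.filter fun x => incr x y).card + Inum X (Y.erase y) := by
      rw [Inum_swap, Inum_swap, Finset.add_sum_erase _ (fun y => (X.filter fun x => incr x y).card) hy]
    rw [hce, ← hn, bd, ← hm, ← hs] at ih
    rw [hsum, hbd]
    have h1 : √((n - 1 : ℕ):ℝ) ≤ t := by rw [ht]; exact Real.sqrt_le_sqrt (by exact_mod_cast Nat.sub_le _ _)
    have h2 : ((n - 1 : ℕ) : ℝ) = n - 1 := by rw [Nat.cast_sub (by omega)]; simp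
    have h3 : (m:ℝ) * √((n - 1 : ℕ):ℝ) ≤ m * t := by gcongr
    rw [h2] at ih h3
    push_cast
    linarith
  by_cases hB : ∃ x ∈ X, ((Y.filter fun y => incr x y).card : ℝ) ≤ κ + 2 ^ 20 * t
  · obtain ⟨x, hx, hdx⟩ := hB
    have hce := Finset.card_erase_of_mem hx
    have ih := IH (X.erase x) (Finset.erase_subset _ _) Y (subset_refl _) (by omega)
    have hsum : Inum X Y = (Y.filter fun y => incr x y).card + Inum (X.erase x) Y := by
      rw [Inum, Inum, Finset.add_sum_erase _ (fun x => (Y.filter fun y => incr x y).card) hx]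
    rw [hce, ← hm, bd, ← hn, ← ht] at ih
    rw [hsum, hbd]
    have h1 : √((m - 1 : ℕ):ℝ) ≤ s := by rw [hs]; exact Real.sqrt_le_sqrt (by exact_mod_cast Nat.sub_le _ _)
    have h2 : ((m - 1 : ℕ) : ℝ) = m - 1 := by rw [Nat.cast_sub (by omega)]; simp
    have h3 : (n:ℝ) * √((m - 1 : ℕ):ℝ) ≤ n * s := by gcongr
    rw [h2] at ih h3
    push_cast
    linarith
  push Not at hA hB
  have hs1 : 1 ≤ s := by rw [hs, Real.one_le_sqrt]; exact_mod_cast hmpos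
  have hnm : n ≤ m ^ 2 := by
    rw [hn, hm]
    apply dcount κ hκ X Y hX kY
    intro y hy
    have := hA y hy
    linarith
  have hsA : 2 ^ 20 ≤ s := by
    obtain ⟨y, hy⟩ := hYne
    have h1 := hA y hy
    have h2 : ((X.filter fun x => incr x y).card : ℝ) ≤ m := by
      rw [hm]; exact_mod_cast Finset.card_filter_le _ _
    rw [← hs2] at h2
    by_contra hc
    push Not at hc
    nlinarith
  obtain ⟨d, hd⟩ : ∃ d, d = ⌊s / 16⌋₊ := ⟨_, rfl⟩
  have hd1 : (d:ℝ) ≤ s / 16 := by rw [hd]; exact Nat.floor_le (by positivity)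
  have hd2 : s / 32 ≤ d := by
    have := Nat.lt_floor_add_one (s/16)
    rw [← hd] at this; linarith
  obtain ⟨R, hR⟩ : ∃ R, R = (d^2 + 5 * d + 5) / 6 := ⟨_, rfl⟩
  have hR1 : 6 * R ≤ d^2+5*d+5 := by omega
  have hR2 : d^2 ≤ 6 * R := by omega
  have hDm : 2 ^ 20 * s - d ≤ 2 * m := by
    rw [← hs2]; nlinarith
  have hdp : d < p := by
    have h1 : s ≤ p := by
      rw [hs]; apply Real.sqrt_le_iff.2
      exact ⟨by positivity, by exact_mod_cast hmp⟩
    have h2 : (d:ℝ) < p := by linarith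
    exact_mod_cast h2
  obtain ⟨S, hSX, hSR, hS⟩ := sampling incr d R (2^20 * s) X Y hXne
    (fun y hy => by have := hA y hy; linarith) (by rw [← hm]; exact hDm)
    (by rw [← hm, ← hn]; exact samp_numeric s m n d R hs2 hsA hnm hd1 hd2 hR2 hDm)
  obtain ⟨f, hf0, hfd, hfS⟩ := interpolation S d (by
    have h6 := six_choose d
    have h7 : S.card * (d+1) ≤ R * (d+1) := Nat.mul_le_mul_right _ hSR
    nlinarith)
  have hfY : ∀ y ∈ Y, L2 y f = 0 := by
    intro y hy
    by_contra hne
    have h1 := card_le_of_roots (L2 y f) hne (S.filter fun x => incr x y)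
      (hX.mono (by exact_mod_cast (Finset.filter_subset _ _).trans hSX)) (by
        intro x hx
        rw [Finset.mem_filter] at hx
        rw [← eval_incr x y hx.2, hfS x hx.1]; simp)
    have h2 := natDegree_L2 y f
    have h3 := hS y hy
    omega
  have hfX : ∀ x ∈ X, L1 x f = 0 := by
    intro x hx
    by_contra hne
    have h1 := card_le_of_roots (L1 x f) hne (Y.filter fun y => incr x y)
      (hY.mono (by exact_mod_cast (Finset.filter_subset _ _))) (by
        intro y hy
        rw [Finset.mem_filter] at hy
        rw [eval_incr x y hy.2, hfY y hy.1]; simp)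
    have h2 := natDegree_L1 x f
    have h3 := hB x hx
    have h4 : ((Y.filter fun y => incr x y).card : ℝ) ≤ d := by exact_mod_cast h1.trans (h2.trans hfd)
    linarith
  have hdsq : (d:ℝ)^2 ≤ m / 256 := by
    rw [← hs2]
    have := pow_le_pow_left₀ (by positivity) hd1 2
    linarith [show (s/16)^2 = s^2/256 by ring]
  have hmpos' : (0:ℝ) < m := by exact_mod_cast hmpos
  have hmn' : (m:ℝ) ≤ n := by exact_mod_cast hmn
  have hsqrt3 : ∀ (x e : ℕ), x ≤ 3 * e^2 → √(x:ℝ) ≤ 2 * e := by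
    intro x e hx
    apply Real.sqrt_le_iff.2
    refine ⟨by positivity, ?_⟩
    have : (x:ℝ) ≤ 3 * e^2 := by exact_mod_cast hx
    nlinarith [sq_nonneg (e:ℝ)]
  obtain ⟨Λ, hΛ⟩ : ∃ Λ : ℝ, Λ = 2^20 * (3 * d * t + 2 * n + 2 * m + 3 * d * s) := ⟨_, rfl⟩
  have main := decomposition X Y hX hY d Λ κ (by
    intro g hg hgd X' hX' Y' hY' h1 h2
    have hgd' : (g.totalDegree : ℝ) ≤ d := by exact_mod_cast hgd
    obtain ⟨e, he⟩ : ∃ e, e = g.totalDegree := ⟨_, rfl⟩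
    rw [← he] at hgd' ⊢
    have hx'm : X'.card ≤ m := hm ▸ Finset.card_le_card hX'
    have hy'n : Y'.card ≤ n := hn ▸ Finset.card_le_card hY'
    have hx'm' : (X'.card : ℝ) ≤ m := by exact_mod_cast hx'm
    have hy'n' : (Y'.card : ℝ) ≤ n := by exact_mod_cast hy'n
    have hsx : √(X'.card : ℝ) ≤ s := by rw [hs]; exact Real.sqrt_le_sqrt hx'm'
    have hsy : √(Y'.card : ℝ) ≤ t := by rw [ht]; exact Real.sqrt_le_sqrt hy'n'
    have hsmall : ∀ x : ℕ, x ≤ 3 * e^2 → (x:ℝ) ≤ e * (3 * d) ∧ x < m := by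
      intro x hx
      have hx' : (x:ℝ) ≤ 3 * e^2 := by exact_mod_cast hx
      have he0 : (0:ℝ) ≤ e := by positivity
      refine ⟨by nlinarith, ?_⟩
      have : (x:ℝ) < m := by nlinarith
      exact_mod_cast this
    rcases trichotomy p g hg (by omega) X' Y' (hX.mono (by exact_mod_cast hX')) (hY.mono (by exact_mod_cast hY')) h1 h2 with h | h | h
    · rw [← he] at h
      obtain ⟨k1, k2⟩ := hsmall _ h
      have ih := IH X' hX' Y' hY' (by omega)
      rw [bd] at ih
      have k3 := hsqrt3 _ _ h
      have k4 : (X'.card : ℝ) * √(Y'.card : ℝ) ≤ (e * (3 * d)) * t := mul_le_mul k1 hsy (Real.sqrt_nonneg _) (by positivity)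
      have k5 : (Y'.card : ℝ) * √(X'.card : ℝ) ≤ n * (2 * e) := mul_le_mul hy'n' k3 (Real.sqrt_nonneg _) (by positivity)
      have k6 : (0:ℝ) ≤ e * m := by positivity
      have k7 : (0:ℝ) ≤ e * (d * s) := by positivity
      have k8 : e * Λ = 2^20 * (e * (3 * d) * t + n * (2 * e) + 2 * (e * m) + 3 * (e * (d * s))) := by
        rw [hΛ]; ring
      linarith
    · rw [← he] at h
      obtain ⟨k1, k2⟩ := hsmall _ h
      have ih := IH X' hX' Y' hY' (by omega)
      rw [bd] at ih
      have k3 := hsqrt3 _ _ h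
      have k4 : (Y'.card : ℝ) * √(X'.card : ℝ) ≤ (e * (3 * d)) * s := mul_le_mul k1 hsx (Real.sqrt_nonneg _) (by positivity)
      have k5 : (X'.card : ℝ) * √(Y'.card : ℝ) ≤ m * (2 * e) := mul_le_mul hx'm' k3 (Real.sqrt_nonneg _) (by positivity)
      have k6 : (0:ℝ) ≤ e * n := by positivity
      have k7 : (0:ℝ) ≤ e * (d * t) := by positivity
      have k8 : e * Λ = 2^20 * (e * (3 * d) * s + m * (2 * e) + 2 * (e * n) + 3 * (e * (d * t))) := by
        rw [hΛ]; ring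
      linarith
    · obtain ⟨a1, a2, a3, a4, h⟩ := h
      have k1 := kX a1 a2 a3 a4
      have k2 : (X'.card : ℝ) ≤ κ := by
        refine le_trans ?_ k1
        norm_cast
        apply Finset.card_le_card
        intro w hw
        rw [Finset.mem_filter]
        exact ⟨hX' hw, h w hw⟩
      have k3 : Inum X' Y' ≤ X'.card * Y'.card := Inum_le_mul_right _ _ _ (fun y _ => Finset.card_filter_le _ _)
      have k4 : (Inum X' Y' : ℝ) ≤ X'.card * Y'.card := by exact_mod_cast k3
      have k5 : (X'.card : ℝ) * Y'.card ≤ κ * Y'.card := by gcongr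
      have k6 : (0:ℝ) ≤ κ * X'.card := by positivity
      have k7 : 0 ≤ e * Λ := by rw [hΛ]; positivity
      linarith) f hf0 hfd X (subset_refl _) Y (subset_refl _) hfX hfY
  rw [← hm, ← hn] at main
  refine main.trans ?_
  rw [hbd]
  have hfd' : (f.totalDegree : ℝ) ≤ d := by exact_mod_cast hfd
  have hΛ0 : 0 ≤ Λ + m + n := by rw [hΛ]; positivity
  have q1 : f.totalDegree * (Λ + m + n) ≤ d * (Λ + m + n) := mul_le_mul_of_nonneg_right hfd' hΛ0
  have q2 : (d:ℝ)^2 * t ≤ m / 256 * t := by gcongr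
  have q3 : (d:ℝ)^2 * s ≤ m / 256 * t := by
    calc (d:ℝ)^2 * s ≤ (d:ℝ)^2 * t := by gcongr
      _ ≤ _ := q2
  have q4 : (d:ℝ) * n ≤ s / 16 * n := by gcongr
  have q5 : (d:ℝ) * m ≤ s / 16 * n := by
    calc (d:ℝ) * m ≤ s/16 * m := by gcongr
      _ ≤ _ := by gcongr
  have q6 : (0:ℝ) ≤ m * t := by positivity
  have q7 : (0:ℝ) ≤ n * s := by positivity
  have q8 : (d:ℝ) * (Λ + m + n) = 2^20 * (3 * (d^2 * t) + 2 * (d * n) + 2 * (d * m) + 3 * (d^2 * s)) + d * m + d * n := by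
    rw [hΛ]; ring
  linarith

theorem core (p : ℕ) [CharP K p] (hp : 0 < p) (κ : ℝ) (hκ : 1 ≤ κ) : ∀ (N : ℕ) (X Y : Finset (K × K × K)),
    X.card + Y.card = N → 
    Set.InjOn Prod.fst (X : Set (K × K × K)) → Set.InjOn Prod.fst (Y : Set (K × K × K)) →
    kc κ X → kc κ Y → X.card ≤ p ^ 2 → Y.card ≤ p ^ 2 →
    (Inum X Y : ℝ) ≤ bd κ X.card Y.card := by
  intro N
  induction N using Nat.strong_induction_on with
  | _ N ih =>
    intro X Y hN hX hY kX kY hXp hYp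
    rcases le_total X.card Y.card with h | h
    · apply core_step p hp κ hκ X Y hX hY kX kY hXp h
      intro X' hX' Y' hY' hlt
      exact ih _ (by omega) X' Y' rfl (hX.mono (by exact_mod_cast hX')) (hY.mono (by exact_mod_cast hY'))
        (kc_mono _ _ _ hX' kX) (kc_mono _ _ _ hY' kY) ((Finset.card_le_card hX').trans hXp)
        ((Finset.card_le_card hY').trans hYp)
    · rw [Inum_comm, bd_comm]
      apply core_step p hp κ hκ Y X hY hX kY kX hYp h
      intro Y' hY' X' hX' hlt
      exact ih _ (by omega) Y' X' rfl (hY.mono (by exact_mod_cast hY')) (hX.mono (by exact_mod_cast hX'))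
        (kc_mono _ _ _ hY' kY) (kc_mono _ _ _ hX' kX) ((Finset.card_le_card hY').trans hYp)
        ((Finset.card_le_card hX').trans hXp)

end Core


section Transf
open scoped Classical
open Polynomial

variable {p : ℕ} [Fact p.Prime]

/-- the transcendental field -/
abbrev FF (p : ℕ) [Fact p.Prime] : Type := FractionRing (Polynomial (ZMod p))

noncomputable def emb (p : ℕ) [Fact p.Prime] : Polynomial (ZMod p) →+* FF p := algebraMap _ _

lemma emb_inj : Function.Injective (emb p) := IsFractionRing.injective _ _

noncomputable def cc (p : ℕ) [Fact p.Prime] : ZMod p →+* FF p := (emb p).comp C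

lemma cc_inj : Function.Injective (cc p) := emb_inj.comp C_injective

noncomputable def mu (p : ℕ) [Fact p.Prime] : FF p := emb p X

lemma PP_ne (m : ZMod p) : 1 + mu p * cc p m ≠ 0 := by
  have : 1 + mu p * cc p m = emb p (1 + X * C m) := by
    simp only [map_add, map_one, map_mul]; rfl
  rw [this, Ne, map_eq_zero_iff _ emb_inj]
  intro h
  have := congrArg (eval 0) h
  simp at this

/-- the map to the field -/
noncomputable def om (q : (ZMod p × ZMod p) × ZMod p) : FF p × FF p × FF p :=
  ((cc p q.2 + mu p ^ 3 * cc p q.1.1 + mu p * cc p q.1.2) / (1 + mu p * cc p q.1.1),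
    cc p q.1.1 / (1 + mu p * cc p q.1.1), cc p q.1.2 / (1 + mu p * cc p q.1.1))

lemma om_fst_inj (q q' : (ZMod p × ZMod p) × ZMod p) (h : (om q).1 = (om q').1) : q = q' := by
  obtain ⟨⟨m, c⟩, u⟩ := q
  obtain ⟨⟨m', c'⟩, u'⟩ := q'
  simp only [om] at h
  rw [div_eq_div_iff (PP_ne _) (PP_ne _)] at h
  have h2 : emb p ((C u + X^3 * C m + X * C c) * (1 + X * C m')) = emb p ((C u' + X^3 * C m' + X * C c') * (1 + X * C m)) := by
    simp only [map_mul, map_add, map_pow, map_one]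
    exact h
  have h3 := emb_inj h2
  have h4 : C u + C (c + m' * u) * X + C (m' * c) * X^2 + C m * X^3 = C u' + C (c' + m * u') * X + C (m * c') * X^2 + C m' * X^3 := by
    simp only [map_add, map_mul]
    linear_combination h3
  have e0 := congrArg (fun q => coeff q 0) h4
  have e1 := congrArg (fun q => coeff q 1) h4
  have e3 := congrArg (fun q => coeff q 3) h4
  generalize hv1 : m' * c = v1 at e0 e1 e3
  generalize hv2 : m * c' = v2 at e0 e1 e3
  generalize hw1 : c + m' * u = w1 at e0 e1 e3
  generalize hw2 : c' + m * u' = w2 at e0 e1 e3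
  simp [coeff_X, coeff_C, coeff_X_pow] at e0 e1 e3
  rw [← hw1, ← hw2] at e1
  subst e0 e3
  have : c = c' := by linear_combination e1
  subst this
  rfl

lemma om_incr (q q' : (ZMod p × ZMod p) × ZMod p)
    (h : q.1.1 * q.2 + q.1.2 = q'.1.1 * q'.2 + q'.1.2) :
    incr (om (q.1, q'.2)) (om (q'.1, q.2)) := by
  have h' := congrArg (cc p) h
  simp only [map_add, map_mul] at h'
  unfold incr
  simp only [om]
  have h1 := PP_ne q.1.1
  have h2 := PP_ne q'.1.1
  generalize hP : 1 + mu p * cc p q.1.1 = P at h1 ⊢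
  generalize hQ : 1 + mu p * cc p q'.1.1 = Q at h2 ⊢
  field_simp
  rw [← hP, ← hQ]
  linear_combination h'

lemma collinear3 (e g c h : FF p) (q1 q2 q3 : (ZMod p × ZMod p) × ZMod p)
    (H : ∀ q ∈ ({q1, q2, q3} : Set ((ZMod p × ZMod p) × ZMod p)), (om q).2.1 = e * (om q).1 + g ∧ (om q).2.2 = c * (om q).1 + h) :
    (q2.2 - q1.2) * (q3.1.1 - q1.1.1) = (q2.1.1 - q1.1.1) * (q3.2 - q1.2) ∧
    (q2.1.1 - q1.1.1) * (q3.1.2 - q1.1.2) = (q2.1.2 - q1.1.2) * (q3.1.1 - q1.1.1) ∧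
    (q2.2 - q1.2) * (q3.1.2 - q1.1.2) = (q2.1.2 - q1.1.2) * (q3.2 - q1.2) := by
  have H' : ∀ q ∈ ({q1, q2, q3} : Set ((ZMod p × ZMod p) × ZMod p)),
      cc p q.1.1 = e * (cc p q.2 + mu p ^ 3 * cc p q.1.1 + mu p * cc p q.1.2) + g * (1 + mu p * cc p q.1.1) ∧
      cc p q.1.2 = c * (cc p q.2 + mu p ^ 3 * cc p q.1.1 + mu p * cc p q.1.2) + h * (1 + mu p * cc p q.1.1) := by
    intro q hq
    obtain ⟨k1, k2⟩ := H q hq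
    simp only [om] at k1 k2
    have h1 := PP_ne q.1.1
    generalize 1 + mu p * cc p q.1.1 = P at h1 k1 k2 ⊢
    constructor
    · field_simp at k1; linear_combination k1
    · field_simp at k2; linear_combination k2
  obtain ⟨m1, c1⟩ := H' q1 (by simp)
  obtain ⟨m2, c2⟩ := H' q2 (by simp)
  obtain ⟨m3, c3⟩ := H' q3 (by simp)
  clear H H'
  -- generalise to field elements
  have key : ∀ (M L u1 m1 c1 u2 m2 c2 u3 m3 c3 : FF p), 
      m1 = e * (u1 + L * m1 + M * c1) + g * (1 + M * m1) → c1 = c * (u1 + L * m1 + M * c1) + h * (1 + M * m1) →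
      m2 = e * (u2 + L * m2 + M * c2) + g * (1 + M * m2) → c2 = c * (u2 + L * m2 + M * c2) + h * (1 + M * m2) →
      m3 = e * (u3 + L * m3 + M * c3) + g * (1 + M * m3) → c3 = c * (u3 + L * m3 + M * c3) + h * (1 + M * m3) →
      (u2 - u1) * (m3 - m1) = (m2 - m1) * (u3 - u1) ∧ (m2 - m1) * (c3 - c1) = (c2 - c1) * (m3 - m1) ∧
      (u2 - u1) * (c3 - c1) = (c2 - c1) * (u3 - u1) := by
    intro M L u1 m1 c1 u2 m2 c2 u3 m3 c3 a1 b1 a2 b2 a3 b3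
    have g1 : ∀ Z1 P1 Z2 P2 Z3 P3 : FF p, (e * Z1 + g * P1) * ((c * Z2 + h * P2) * P3 - P2 * (c * Z3 + h * P3))
       - (e * Z2 + g * P2) * ((c * Z1 + h * P1) * P3 - P1 * (c * Z3 + h * P3)) 
       + (e * Z3 + g * P3) * ((c * Z1 + h * P1) * P2 - P1 * (c * Z2 + h * P2)) = 0 := by
      intros; ring
    have g2 : ∀ Z1 P1 Z2 P2 Z3 P3 : FF p, Z1 * ((e * Z2 + g * P2) * P3 - P2 * (e * Z3 + g * P3))
       - Z2 * ((e * Z1 + g * P1) * P3 - P1 * (e * Z3 + g * P3)) 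
       + Z3 * ((e * Z1 + g * P1) * P2 - P1 * (e * Z2 + g * P2)) = 0 := by
      intros; ring
    have g3 : ∀ Z1 P1 Z2 P2 Z3 P3 : FF p, Z1 * ((c * Z2 + h * P2) * P3 - P2 * (c * Z3 + h * P3))
       - Z2 * ((c * Z1 + h * P1) * P3 - P1 * (c * Z3 + h * P3)) 
       + Z3 * ((c * Z1 + h * P1) * P2 - P1 * (c * Z2 + h * P2)) = 0 := by
      intros; ring
    have g4 : ∀ Z1 P1 Z2 P2 Z3 P3 : FF p, Z1 * ((e * Z2 + g * P2) * (c * Z3 + h * P3) - (c * Z2 + h * P2) * (e * Z3 + g * P3))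
       - Z2 * ((e * Z1 + g * P1) * (c * Z3 + h * P3) - (c * Z1 + h * P1) * (e * Z3 + g * P3)) 
       + Z3 * ((e * Z1 + g * P1) * (c * Z2 + h * P2) - (c * Z1 + h * P1) * (e * Z2 + g * P2)) = 0 := by
      intros; ring
    have G1 := g1 (u1 + L * m1 + M * c1) (1 + M * m1) (u2 + L * m2 + M * c2) (1 + M * m2) (u3 + L * m3 + M * c3) (1 + M * m3)
    have G2 := g2 (u1 + L * m1 + M * c1) (1 + M * m1) (u2 + L * m2 + M * c2) (1 + M * m2) (u3 + L * m3 + M * c3) (1 + M * m3)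
    have G3 := g3 (u1 + L * m1 + M * c1) (1 + M * m1) (u2 + L * m2 + M * c2) (1 + M * m2) (u3 + L * m3 + M * c3) (1 + M * m3)
    have G4 := g4 (u1 + L * m1 + M * c1) (1 + M * m1) (u2 + L * m2 + M * c2) (1 + M * m2) (u3 + L * m3 + M * c3) (1 + M * m3)
    rw [← a1, ← a2, ← a3] at G1 G2 G4
    rw [← b1, ← b2, ← b3] at G1 G3 G4
    clear g1 g2 g3 g4
    have D1 : (m2 - m1) * (c3 - c1) = (c2 - c1) * (m3 - m1) := by linear_combination G1
    have D2 : (u2 - u1) * (m3 - m1) = (m2 - m1) * (u3 - u1) := by linear_combination G2 + M * G1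
    refine ⟨D2, D1, ?_⟩
    linear_combination G3 - L * G1 + M * G4
  obtain ⟨k1, k2, k3⟩ := key _ _ _ _ _ _ _ _ _ _ _ m1 c1 m2 c2 m3 c3
  simp only [← map_sub, ← map_mul] at k1 k2 k3
  exact ⟨cc_inj k1, cc_inj k2, cc_inj k3⟩

end Transf


section LinesEnergy
open scoped Classical

variable {p : ℕ} [Fact p.Prime]

lemma om_inj : Function.Injective (om (p := p)) := fun q q' h => om_fst_inj q q' (by rw [h])

theorem kc_om (κ : ℝ) (L : Finset (ZMod p × ZMod p)) (U : Finset (ZMod p)) (hU : (U.card : ℝ) ≤ κ)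
    (hL : ∀ α β γ : ZMod p, (α ≠ 0 ∨ β ≠ 0) →
      ((L.filter fun l => α * l.1 + β * l.2 = γ).card : ℝ) ≤ κ) :
    kc κ ((L ×ˢ U).image om) := by
  intro e g c h
  set Q := (L ×ˢ U).filter fun q => (om q).2.1 = e * (om q).1 + g ∧ (om q).2.2 = c * (om q).1 + h with hQ
  have h1 : (((L ×ˢ U).image om).filter fun w => w.2.1 = e*w.1+g ∧ w.2.2 = c*w.1+h).card ≤ Q.card := by
    rw [Finset.filter_image]
    exact Finset.card_image_le
  refine le_trans (b := (Q.card : ℝ)) (by norm_cast; convert h1) ?_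
  have hc : ∀ q1 ∈ Q, ∀ q2 ∈ Q, ∀ q3 ∈ Q, 
    (q2.2 - q1.2) * (q3.1.1 - q1.1.1) = (q2.1.1 - q1.1.1) * (q3.2 - q1.2) ∧
    (q2.1.1 - q1.1.1) * (q3.1.2 - q1.1.2) = (q2.1.2 - q1.1.2) * (q3.1.1 - q1.1.1) ∧
    (q2.2 - q1.2) * (q3.1.2 - q1.1.2) = (q2.1.2 - q1.1.2) * (q3.2 - q1.2) := by
    intro q1 h1 q2 h2 q3 h3
    apply collinear3 e g c h
    intro q hq
    simp only [Set.mem_insert_iff, Set.mem_singleton_iff] at hq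
    rcases hq with rfl | rfl | rfl
    · exact (mem_filter.1 h1).2
    · exact (mem_filter.1 h2).2
    · exact (mem_filter.1 h3).2
  by_cases hi : Set.InjOn Prod.snd (Q : Set ((ZMod p × ZMod p) × ZMod p))
  · have : Q.card ≤ U.card := by
      apply Finset.card_le_card_of_injOn Prod.snd _ hi
      intro q hq
      have := (mem_filter.1 hq).1
      exact (mem_product.1 this).2
    exact le_trans (by exact_mod_cast this) hU
  · have hi' : ∃ q1 ∈ Q, ∃ q2 ∈ Q, q1.2 = q2.2 ∧ q1 ≠ q2 := by
      by_contra hcon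
      apply hi
      intro x hx y hy hxy
      by_contra hne
      exact hcon ⟨x, hx, y, hy, hxy, hne⟩
    obtain ⟨q1, m1, q2, m2, e12, ne12⟩ := hi'
    have hne : q2.1.2 - q1.1.2 ≠ 0 ∨ -(q2.1.1 - q1.1.1) ≠ 0 := by
      by_contra hcon
      push Not at hcon
      apply ne12
      refine Prod.ext (Prod.ext ?_ ?_) e12
      · linear_combination hcon.2
      · linear_combination -hcon.1
    have hu : ∀ q ∈ Q, q.2 = q1.2 := by
      intro q hq
      obtain ⟨a, -, b⟩ := hc q1 m1 q2 m2 q hq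
      rw [← e12, sub_self, zero_mul] at a b
      rcases hne with hne | hne
      · have := (mul_eq_zero.1 b.symm).resolve_left hne
        linear_combination this
      · have hne' : q2.1.1 - q1.1.1 ≠ 0 := fun h => hne (by rw [h, neg_zero])
        have := (mul_eq_zero.1 a.symm).resolve_left hne'
        linear_combination this
    refine le_trans ?_ (hL (q2.1.2 - q1.1.2) (-(q2.1.1 - q1.1.1)) ((q2.1.2 - q1.1.2) * q1.1.1 - (q2.1.1 - q1.1.1) * q1.1.2) hne)
    norm_cast
    apply Finset.card_le_card_of_injOn Prod.fst
    · intro q hq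
      have h5 := (mem_product.1 (mem_filter.1 hq).1).1
      obtain ⟨-, a, -⟩ := hc q1 m1 q2 m2 q hq
      simp only [coe_filter, Set.mem_ofPred_eq]
      refine ⟨h5, ?_⟩
      linear_combination -a
    · intro x hx y hy hxy
      exact Prod.ext hxy ((hu x hx).trans (hu y hy).symm)

theorem lines_energy (κ : ℝ) (hκ : 1 ≤ κ) (L : Finset (ZMod p × ZMod p)) (U : Finset (ZMod p))
    (hU : (U.card : ℝ) ≤ κ)
    (hL : ∀ α β γ : ZMod p, (α ≠ 0 ∨ β ≠ 0) →
      ((L.filter fun l => α * l.1 + β * l.2 = γ).card : ℝ) ≤ κ)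
    (hM : L.card * U.card ≤ p ^ 2) :
    (((((L ×ˢ U) ×ˢ (L ×ˢ U)).filter fun x => x.1.1.1 * x.1.2 + x.1.1.2 = x.2.1.1 * x.2.2 + x.2.1.2).card : ℕ) : ℝ)
      ≤ bd κ (L.card * U.card) (L.card * U.card) := by
  set W := (L ×ˢ U).image om with hW
  have hWc : W.card = L.card * U.card := by
    rw [hW, card_image_of_injective _ om_inj, card_product]
  have : CharP (FF p) p := charP_of_injective_algebraMap (IsFractionRing.injective (Polynomial (ZMod p)) (FF p)) p
  have hin : Set.InjOn Prod.fst (W : Set (FF p × FF p × FF p)) := by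
    intro x hx y hy hxy
    rw [mem_coe, hW, mem_image] at hx hy
    obtain ⟨q, -, rfl⟩ := hx
    obtain ⟨q', -, rfl⟩ := hy
    rw [om_fst_inj q q' hxy]
  have hk := kc_om κ L U hU hL
  have := core p (Fact.out : p.Prime).pos κ hκ _ W W rfl hin hin hk hk (hWc ▸ hM) (hWc ▸ hM)
  rw [hWc] at this
  push_cast at this
  refine le_trans ?_ this
  norm_cast
  unfold Inum
  rw [← card_sigma]
  refine Finset.card_le_card_of_injOn (fun x => ⟨om (x.1.1, x.2.2), om (x.2.1, x.1.2)⟩) ?_ ?_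
  · intro x hx
    simp only [coe_filter, mem_product, Set.mem_ofPred_eq] at hx
    simp only [coe_sigma, Set.mem_sigma_iff, mem_coe, mem_filter]
    obtain ⟨⟨⟨a, b⟩, c, d⟩, e⟩ := hx
    exact ⟨mem_image_of_mem _ (mem_product.2 ⟨a, d⟩), mem_image_of_mem _ (mem_product.2 ⟨c, b⟩), om_incr _ _ e⟩
  · intro x hx y hy hxy
    simp only [Sigma.mk.injEq, heq_eq_eq] at hxy
    have h1 := om_inj hxy.1
    have h2 := om_inj hxy.2
    simp only [Prod.mk.injEq] at h1 h2
    exact Prod.ext (Prod.ext h1.1 h2.2) (Prod.ext h2.1 h1.2)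

end LinesEnergy


section Reduction

variable {p : ℕ} [Fact p.Prime]

def Icount (B U : Finset (ZMod p)) : ℕ :=
  (((B ×ˢ B) ×ˢ (U ×ˢ U)).filter fun x => x.1.1 - x.1.1^2*x.2.1 = x.1.2 - x.1.2^2*x.2.2).card

def inum (U : Finset (ZMod p)) (l : ZMod p × ZMod p) : ℕ :=
  ((U ×ˢ U).filter fun v => l.1 * v.1 + l.2 = v.2).card

def gm (x : ZMod p × ZMod p) : ZMod p × ZMod p := ((x.1 / x.2)^2, (x.2 - x.1) / x.2^2)

lemma red1 (A B : Finset (ZMod p)) (hA : (0 : ZMod p) ∉ A) (hB : (0 : ZMod p) ∉ B) :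
    addEnergy2 p (A.image fun a => a⁻¹) (B.image fun b => b⁻¹) ≤
      A.card ^ 2 + Icount B ((sumSet p A B).image fun a => a⁻¹) := by
  unfold addEnergy2
  set X := A.image fun a => a⁻¹ with hX
  set Y := B.image fun b => b⁻¹ with hY
  have hXm : ∀ x ∈ X, x ≠ 0 ∧ x⁻¹ ∈ A := by
    intro x hx
    rw [hX, mem_image] at hx
    obtain ⟨a, ha, rfl⟩ := hx
    refine ⟨inv_ne_zero fun h => hA (h ▸ ha), by simpa using ha⟩
  have hYm : ∀ x ∈ Y, x ≠ 0 ∧ x⁻¹ ∈ B := by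
    intro x hx
    rw [hY, mem_image] at hx
    obtain ⟨a, ha, rfl⟩ := hx
    refine ⟨inv_ne_zero fun h => hB (h ▸ ha), by simpa using ha⟩
  rw [← Finset.card_filter_add_card_filter_not (fun x : (ZMod p × ZMod p) × (ZMod p × ZMod p) => x.1.1 + x.2.1 = 0)]
  apply add_le_add
  · have h1 : X.card ≤ A.card := card_image_le
    calc _ ≤ (X ×ˢ X).card := by
          apply Finset.card_le_card_of_injOn Prod.fst
          · intro x hx
            simp only [coe_filter, mem_filter, mem_product, Set.mem_ofPred_eq] at hx
            simp only [mem_coe, mem_product]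
            exact hx.1.1.1
          · intro x hx y hy hxy
            simp only [coe_filter, mem_filter, mem_product, Set.mem_ofPred_eq] at hx hy
            have e1 : x.1.1 = y.1.1 := by rw [hxy]
            have e2 : x.1.2 = y.1.2 := by rw [hxy]
            refine Prod.ext hxy (Prod.ext ?_ ?_)
            · linear_combination hx.2 - hy.2 - e1
            · linear_combination hx.2 - hx.1.2 - hy.2 + hy.1.2 - e2
      _ ≤ A.card ^ 2 := by rw [card_product, sq]; exact Nat.mul_le_mul h1 h1
  · unfold Icount
    refine Finset.card_le_card_of_injOn (fun x => ((x.2.1⁻¹, x.2.2⁻¹), ((x.1.1⁻¹ + x.2.1⁻¹)⁻¹, (x.1.2⁻¹ + x.2.2⁻¹)⁻¹))) ?_ ?_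
    · intro x hx
      simp only [coe_filter, mem_filter, mem_product, Set.mem_ofPred_eq] at hx ⊢
      obtain ⟨⟨⟨⟨a1, a2⟩, b1, b2⟩, e⟩, n⟩ := hx
      have key : ∀ x y : ZMod p, x ≠ 0 → y ≠ 0 → x + y ≠ 0 → y⁻¹ - y⁻¹^2 * (x⁻¹ + y⁻¹)⁻¹ = (x+y)⁻¹ := by
        intro x y hx hy hxy
        have : x⁻¹ + y⁻¹ = (x + y) / (x * y) := by field_simp; ring
        rw [this]
        field_simp
        ring
      refine ⟨⟨⟨(hYm _ b1).2, (hYm _ b2).2⟩, mem_image_of_mem _ ?_, mem_image_of_mem _ ?_⟩, ?_⟩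
      · exact mem_image.2 ⟨(x.1.1⁻¹, x.2.1⁻¹), mem_product.2 ⟨(hXm _ a1).2, (hYm _ b1).2⟩, rfl⟩
      · exact mem_image.2 ⟨(x.1.2⁻¹, x.2.2⁻¹), mem_product.2 ⟨(hXm _ a2).2, (hYm _ b2).2⟩, rfl⟩
      · rw [key _ _ (hXm _ a1).1 (hYm _ b1).1 n, key _ _ (hXm _ a2).1 (hYm _ b2).1 (e ▸ n), e]
    · intro x hx y hy hxy
      simp only [Prod.mk.injEq, inv_inj] at hxy
      obtain ⟨⟨h1, h2⟩, h3, h4⟩ := hxy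
      rw [h1, add_left_inj, inv_inj] at h3
      rw [h2, add_left_inj, inv_inj] at h4
      exact Prod.ext (Prod.ext h3 h4) (Prod.ext h1 h2)

lemma red2 (B U : Finset (ZMod p)) (hB : (0 : ZMod p) ∉ B) :
    Icount B U ≤ B.card * U.card + ∑ x ∈ B.offDiag, inum U (gm x) := by
  have h0 : ∀ b ∈ B, b ≠ 0 := fun b hb h => hB (h ▸ hb)
  unfold Icount
  rw [← Finset.card_filter_add_card_filter_not (fun x : (ZMod p × ZMod p) × (ZMod p × ZMod p) => x.1.1 = x.1.2)]
  apply add_le_add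
  · rw [← card_product]
    apply Finset.card_le_card_of_injOn (fun x => (x.1.1, x.2.1))
    · intro x hx
      simp only [coe_filter, mem_filter, mem_product, Set.mem_ofPred_eq] at hx
      simp only [mem_coe, mem_product]
      exact ⟨hx.1.1.1.1, hx.1.1.2.1⟩
    · have aux : ∀ x ∈ ((((B ×ˢ B) ×ˢ (U ×ˢ U)).filter fun x => x.1.1 - x.1.1^2*x.2.1 = x.1.2 - x.1.2^2*x.2.2).filter fun x => x.1.1 = x.1.2), x.1.1 = x.1.2 ∧ x.2.1 = x.2.2 := by
        intro x hx
        simp only [mem_filter, mem_product] at hx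
        refine ⟨hx.2, ?_⟩
        have h1 := hx.1.2
        rw [← hx.2] at h1
        have h2 : x.1.1^2 ≠ 0 := pow_ne_zero _ (h0 _ hx.1.1.1.1)
        apply mul_left_cancel₀ h2
        linear_combination -h1
      intro x hx y hy hxy
      obtain ⟨a, b⟩ := aux x hx
      obtain ⟨c, d⟩ := aux y hy
      simp only [Prod.mk.injEq] at hxy
      exact Prod.ext (Prod.ext hxy.1 (by rw [← a, ← c, hxy.1])) (Prod.ext hxy.2 (by rw [← b, ← d, hxy.2]))
  · unfold inum
    rw [← card_sigma]
    refine Finset.card_le_card_of_injOn (fun x => ⟨x.1, x.2⟩) ?_ ?_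
    · intro x hx
      simp only [coe_filter, mem_filter, mem_product, Set.mem_ofPred_eq] at hx
      simp only [coe_sigma, Set.mem_sigma_iff, mem_coe, mem_filter, mem_offDiag, mem_product]
      obtain ⟨⟨⟨⟨a1, a2⟩, b1, b2⟩, e⟩, n⟩ := hx
      refine ⟨⟨a1, a2, n⟩, ⟨b1, b2⟩, ?_⟩
      have := h0 _ a2
      simp only [gm]
      field_simp
      linear_combination -e
    · intro x hx y hy hxy
      simp only [Sigma.mk.injEq, heq_eq_eq] at hxy
      exact Prod.ext hxy.1 hxy.2

lemma gm_fib (B : Finset (ZMod p)) (hB : (0 : ZMod p) ∉ B) (l : ZMod p × ZMod p) :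
    (B.offDiag.filter fun x => gm x = l).card ≤ 2 := by
  have h0 : ∀ b ∈ B, b ≠ 0 := fun b hb h => hB (h ▸ hb)
  rcases (B.offDiag.filter fun x => gm x = l).eq_empty_or_nonempty with h | ⟨x0, hx0⟩
  · rw [h]; simp
  · have h1 : ({x0.1/x0.2, -(x0.1/x0.2)} : Finset (ZMod p)).card ≤ 2 := card_le_two
    refine le_trans (Finset.card_le_card_of_injOn (fun x => x.1 / x.2) ?_ ?_) h1
    · intro x hx
      have e0 := (mem_filter.1 hx0).2
      have e1 := (mem_filter.1 hx).2
      have : (x.1/x.2)^2 = (x0.1/x0.2)^2 := by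
        have := congrArg Prod.fst (e1.trans e0.symm)
        exact this
      rcases sq_eq_sq_iff_eq_or_eq_neg.1 this with h | h
      · simp [h]
      · simp [h]
    · intro x hx y hy hxy
      have hx := mem_filter.1 hx
      have hy := mem_filter.1 hy
      have e : (x.2 - x.1) / x.2^2 = (y.2 - y.1) / y.2^2 := congrArg Prod.snd (hx.2.trans hy.2.symm)
      obtain ⟨a1, a2, n⟩ := mem_offDiag.1 hx.1
      obtain ⟨b1, b2, m⟩ := mem_offDiag.1 hy.1
      have z1 := h0 _ a2
      have z2 := h0 _ b2
      simp only at hxy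
      have f1 : (x.2 - x.1) / x.2^2 = (1 - x.1/x.2) / x.2 := by field_simp
      have f2 : (y.2 - y.1) / y.2^2 = (1 - y.1/y.2) / y.2 := by field_simp
      rw [f1, f2, hxy] at e
      have z3 : 1 - y.1 / y.2 ≠ 0 := by
        intro h
        apply m
        field_simp at h
        linear_combination -h
      have e2 : x.2 = y.2 := by
        rw [div_eq_div_iff z1 z2] at e
        exact (mul_left_cancel₀ z3 e).symm
      refine Prod.ext ?_ e2
      rw [e2] at hxy
      exact (div_left_inj' z2).1 hxy

lemma quad2 (B : Finset (ZMod p)) (α β γ : ZMod p) (h : α ≠ 0 ∨ β ≠ 0) :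
    (B.filter fun b => α * b^2 + β * b + γ = 0).card ≤ 2 := by
  by_contra hc
  push Not at hc
  obtain ⟨a, b, c, ha, hb, hc, h1, h2, h3⟩ := two_lt_card_iff.1 hc
  have ha := (mem_filter.1 ha).2
  have hb := (mem_filter.1 hb).2
  have hc := (mem_filter.1 hc).2
  have e1 : α * (a + b) + β = 0 := by
    apply mul_left_cancel₀ (sub_ne_zero.2 h1)
    linear_combination ha - hb
  have e2 : α * (a + c) + β = 0 := by
    apply mul_left_cancel₀ (sub_ne_zero.2 h2)
    linear_combination ha - hc
  have e3 : α = 0 := by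
    apply mul_left_cancel₀ (sub_ne_zero.2 h3)
    linear_combination e1 - e2
  rcases h with h | h
  · exact h e3
  · apply h; rw [e3] at e1; simpa using e1

lemma line_bound (B : Finset (ZMod p)) (hB : (0 : ZMod p) ∉ B) (α β γ : ZMod p) (h : α ≠ 0 ∨ β ≠ 0) :
    ((B.offDiag.image gm).filter fun l => α * l.1 + β * l.2 = γ).card ≤ 2 * B.card := by
  have h0 : ∀ b ∈ B, b ≠ 0 := fun b hb h => hB (h ▸ hb)
  rw [filter_image]
  refine card_image_le.trans ?_
  apply Finset.card_le_mul_card_image_of_maps_to (f := Prod.snd)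
  · intro x hx
    exact (mem_offDiag.1 (mem_filter.1 hx).1).2.1
  · intro b hb
    refine le_trans (Finset.card_le_card_of_injOn Prod.fst ?_ ?_) (quad2 B α (-β) (β * b - γ * b^2) (by simpa using h))
    · intro x hx
      simp only [coe_filter, mem_filter, Set.mem_ofPred_eq] at hx ⊢
      obtain ⟨⟨m, e⟩, rfl⟩ := hx
      obtain ⟨a1, a2, n⟩ := mem_offDiag.1 m
      refine ⟨a1, ?_⟩
      have := h0 _ a2
      simp only [gm] at e
      field_simp at e
      linear_combination e
    · intro x hx y hy hxy
      simp only [coe_filter, mem_filter, Set.mem_ofPred_eq] at hx hy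
      exact Prod.ext hxy (hx.2.trans hy.2.symm)

lemma fib_sum (B : Finset (ZMod p)) (hB : (0 : ZMod p) ∉ B) (f : ZMod p × ZMod p → ℝ) (hf : ∀ l, 0 ≤ f l) :
    ∑ x ∈ B.offDiag, f (gm x) ≤ 2 * ∑ l ∈ B.offDiag.image gm, f l := by
  rw [Finset.sum_comp, mul_sum]
  apply sum_le_sum
  intro l _
  rw [nsmul_eq_mul]
  apply mul_le_mul_of_nonneg_right _ (hf l)
  exact_mod_cast gm_fib B hB l

end Reduction


section Regimes

variable {p : ℕ} [Fact p.Prime]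

lemma inum_le (U : Finset (ZMod p)) (l : ZMod p × ZMod p) : inum U l ≤ U.card := by
  unfold inum
  apply Finset.card_le_card_of_injOn Prod.fst
  · intro x hx
    exact (mem_product.1 (mem_filter.1 hx).1).1
  · intro x hx y hy hxy
    have h1 := (mem_filter.1 hx).2
    have h2 := (mem_filter.1 hy).2
    refine Prod.ext hxy ?_
    rw [← h1, ← h2, hxy]

lemma inum_sum_cs (L : Finset (ZMod p × ZMod p)) (U : Finset (ZMod p)) :
    (∑ l ∈ L, (inum U l : ℝ)) ^ 2 ≤ U.card *
      ((((L ×ˢ U) ×ˢ (L ×ˢ U)).filter fun x => x.1.1.1 * x.1.2 + x.1.1.2 = x.2.1.1 * x.2.2 + x.2.1.2).card : ℝ) := by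
  set r : ZMod p → ℕ := fun v => ((L ×ˢ U).filter fun q => q.1.1 * q.2 + q.1.2 = v).card with hr
  have h1 : ∑ l ∈ L, inum U l ≤ ∑ v ∈ U, r v := by
    unfold inum
    rw [hr, ← card_sigma, ← card_sigma]
    refine Finset.card_le_card_of_injOn (fun x => ⟨x.2.2, (x.1, x.2.1)⟩) ?_ ?_
    · intro x hx
      simp only [coe_sigma, Set.mem_sigma_iff, mem_coe, mem_filter, mem_product] at hx ⊢
      exact ⟨hx.2.1.2, ⟨hx.1, hx.2.1.1⟩, hx.2.2⟩
    · rintro ⟨x, x1, x2⟩ hx ⟨y, y1, y2⟩ hy hxy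
      simp only [Sigma.mk.injEq, heq_eq_eq, Prod.mk.injEq] at hxy
      obtain ⟨rfl, rfl, rfl⟩ := hxy
      rfl
  have h2 : ∑ v ∈ U, r v ^ 2 ≤ (((L ×ˢ U) ×ˢ (L ×ˢ U)).filter fun x => x.1.1.1 * x.1.2 + x.1.1.2 = x.2.1.1 * x.2.2 + x.2.1.2).card := by
    have : ∀ v ∈ U, r v ^ 2 = (((L ×ˢ U).filter fun q => q.1.1 * q.2 + q.1.2 = v) ×ˢ ((L ×ˢ U).filter fun q => q.1.1 * q.2 + q.1.2 = v)).card := by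
      intro v _
      rw [card_product, sq]
    rw [sum_congr rfl this, ← card_sigma]
    refine Finset.card_le_card_of_injOn (fun x => x.2) ?_ ?_
    · intro x hx
      simp only [coe_sigma, Set.mem_sigma_iff, mem_coe, mem_filter, mem_product] at hx ⊢
      obtain ⟨a, ⟨b, c⟩, d, e⟩ := hx
      exact ⟨⟨b, d⟩, c.trans e.symm⟩
    · rintro ⟨x, x1, x2⟩ hx ⟨y, y1, y2⟩ hy hxy
      simp only [coe_sigma, Set.mem_sigma_iff, mem_coe, mem_filter, mem_product] at hx hy
      simp only [Prod.mk.injEq] at hxy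
      obtain ⟨rfl, rfl⟩ := hxy
      have : x = y := by rw [← hx.2.1.2, ← hy.2.1.2]
      subst this
      rfl
  have h1' : ∑ l ∈ L, (inum U l : ℝ) ≤ ∑ v ∈ U, (r v : ℝ) := by exact_mod_cast h1
  have h2' : ∑ v ∈ U, (r v : ℝ) ^ 2 ≤ ((((L ×ˢ U) ×ˢ (L ×ˢ U)).filter fun x => x.1.1.1 * x.1.2 + x.1.1.2 = x.2.1.1 * x.2.2 + x.2.1.2).card : ℝ) := by
    exact_mod_cast h2
  calc (∑ l ∈ L, (inum U l : ℝ)) ^ 2 ≤ (∑ v ∈ U, (r v : ℝ)) ^ 2 := by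
        apply pow_le_pow_left₀ _ h1'
        positivity
    _ ≤ U.card * ∑ v ∈ U, (r v : ℝ) ^ 2 := sq_sum_le_card_mul_sum_sq
    _ ≤ _ := by gcongr

lemma inum_sum (U : Finset (ZMod p)) : ∑ l : ZMod p × ZMod p, inum U l = p * U.card ^ 2 := by
  unfold inum
  simp_rw [card_filter]
  rw [sum_comm]
  have : ∀ v ∈ U ×ˢ U, (∑ l : ZMod p × ZMod p, if l.1 * v.1 + l.2 = v.2 then 1 else 0) = p := by
    intro v _
    rw [← card_filter]
    have : (univ.filter fun l : ZMod p × ZMod p => l.1 * v.1 + l.2 = v.2) = univ.image fun m => (m, v.2 - m * v.1) := by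
      ext l
      simp only [mem_filter, mem_univ, true_and, mem_image]
      constructor
      · intro h
        exact ⟨l.1, Prod.ext rfl (by simp only; linear_combination -h)⟩
      · rintro ⟨m, rfl⟩
        ring
    rw [this, card_image_of_injective _ (fun a b h => congrArg Prod.fst h), card_univ, ZMod.card]
  rw [sum_congr rfl this, sum_const, card_product, smul_eq_mul]
  ring

lemma inum_sum_sq (U : Finset (ZMod p)) : ∑ l : ZMod p × ZMod p, inum U l ^ 2 ≤ p * U.card ^ 2 + U.card ^ 4 := by
  have h1 : ∀ l : ZMod p × ZMod p, inum U l ^ 2 = inum U l +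
     (((U ×ˢ U).offDiag).filter fun x => l.1 * x.1.1 + l.2 = x.1.2 ∧ l.1 * x.2.1 + l.2 = x.2.2).card := by
    intro l
    have : (((U ×ˢ U).offDiag).filter fun x => l.1 * x.1.1 + l.2 = x.1.2 ∧ l.1 * x.2.1 + l.2 = x.2.2)
      = ((U ×ˢ U).filter fun v => l.1 * v.1 + l.2 = v.2).offDiag := by
      ext x
      simp only [mem_filter, mem_offDiag]
      tauto
    rw [this, offDiag_card]
    unfold inum
    have := Nat.le_mul_self (((U ×ˢ U).filter fun v => l.1 * v.1 + l.2 = v.2).card)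
    rw [sq]
    omega
  rw [sum_congr rfl fun l _ => h1 l, sum_add_distrib, inum_sum]
  gcongr
  simp_rw [card_filter]
  rw [sum_comm]
  have : ∀ x ∈ (U ×ˢ U).offDiag, (∑ l : ZMod p × ZMod p, if l.1 * x.1.1 + l.2 = x.1.2 ∧ l.1 * x.2.1 + l.2 = x.2.2 then 1 else 0) ≤ 1 := by
    intro x hx
    have hne := (mem_offDiag.1 hx).2.2
    rw [← card_filter, card_le_one]
    intro l hl l' hl'
    obtain ⟨a, b⟩ := (mem_filter.1 hl).2
    obtain ⟨a', b'⟩ := (mem_filter.1 hl').2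
    have h5 : x.1.1 - x.2.1 ≠ 0 := by
      intro h
      apply hne
      refine Prod.ext (by linear_combination h) ?_
      linear_combination -a + b + l.1 * h
    have h6 : l.1 = l'.1 := by
      apply mul_left_cancel₀ h5
      linear_combination a - b - a' + b'
    refine Prod.ext h6 ?_
    linear_combination a - a' - x.1.1 * h6
  refine (sum_le_sum this).trans ?_
  rw [sum_const, smul_eq_mul, mul_one, offDiag_card, card_product]
  refine (Nat.sub_le _ _).trans (le_of_eq ?_)
  ring

lemma variance (U : Finset (ZMod p)) :
    ∑ l : ZMod p × ZMod p, ((inum U l : ℝ) - (U.card:ℝ)^2 / p) ^ 2 ≤ p * (U.card:ℝ)^2 := by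
  have hp : (0:ℝ) < p := by exact_mod_cast (Fact.out : p.Prime).pos
  have h1 : ∑ l : ZMod p × ZMod p, (inum U l : ℝ) = p * (U.card:ℝ) ^ 2 := by exact_mod_cast inum_sum U
  have h2 : ∑ l : ZMod p × ZMod p, (inum U l : ℝ)^2 ≤ p * (U.card:ℝ) ^ 2 + (U.card:ℝ)^4 := by exact_mod_cast inum_sum_sq U
  have h3 : ∀ l : ZMod p × ZMod p, ((inum U l : ℝ) - (U.card:ℝ)^2 / p) ^ 2 = (inum U l : ℝ)^2 - 2 * ((U.card:ℝ)^2 / p) * inum U l + ((U.card:ℝ)^2 / p)^2 := by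
    intro l; ring
  rw [sum_congr rfl fun l _ => h3 l, sum_add_distrib, sum_sub_distrib, ← mul_sum, h1, sum_const, card_univ, Fintype.card_prod, ZMod.card, nsmul_eq_mul]
  have h4 : 2 * ((U.card:ℝ)^2 / p) * (p * (U.card:ℝ)^2) = 2 * (U.card:ℝ)^4 := by field_simp
  have h5 : ((p * p : ℕ):ℝ) * ((U.card:ℝ)^2 / p)^2 = (U.card:ℝ)^4 := by push_cast; field_simp
  rw [h4, h5]
  linarith

lemma regime1 (B U : Finset (ZMod p)) (hB : (0 : ZMod p) ∉ B) :
    ∑ x ∈ B.offDiag, (inum U (gm x) : ℝ) ≤ (B.card:ℝ)^2 * (U.card:ℝ)^2 / p + B.card * U.card * √(2 * p) := by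
  have hp : (0:ℝ) < p := by exact_mod_cast (Fact.out : p.Prime).pos
  have hc : ((B.offDiag.card : ℕ):ℝ) ≤ (B.card:ℝ)^2 := by
    rw [offDiag_card, sq]
    exact_mod_cast Nat.sub_le _ _
  have h1 : ∑ x ∈ B.offDiag, (inum U (gm x) : ℝ) = B.offDiag.card * ((U.card:ℝ)^2 / p) + ∑ x ∈ B.offDiag, ((inum U (gm x) : ℝ) - (U.card:ℝ)^2 / p) := by
    rw [sum_sub_distrib, sum_const, nsmul_eq_mul]; ring
  have h2 : (∑ x ∈ B.offDiag, ((inum U (gm x) : ℝ) - (U.card:ℝ)^2 / p))^2 ≤ (B.card * U.card * √(2 * p))^2 := by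
    calc _ ≤ (B.offDiag.card : ℝ) * ∑ x ∈ B.offDiag, ((inum U (gm x) : ℝ) - (U.card:ℝ)^2 / p)^2 := sq_sum_le_card_mul_sum_sq
      _ ≤ (B.card:ℝ)^2 * (2 * (p * (U.card:ℝ)^2)) := by
        apply mul_le_mul hc _ (by positivity) (by positivity)
        refine (fib_sum B hB (fun l => ((inum U l : ℝ) - (U.card:ℝ)^2 / p)^2) (fun l => sq_nonneg _)).trans ?_
        apply mul_le_mul_of_nonneg_left _ (by norm_num)
        refine le_trans ?_ (variance U)
        apply sum_le_sum_of_subset_of_nonneg (subset_univ _)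
        intros; positivity
      _ = _ := by
        rw [mul_pow, Real.sq_sqrt (by positivity)]; ring
  have h3 := abs_le_of_sq_le_sq' h2 (by positivity)
  rw [h1]
  have h4 : (B.offDiag.card:ℝ) * ((U.card:ℝ)^2 / p) ≤ (B.card:ℝ)^2 * ((U.card:ℝ)^2 / p) := by gcongr
  rw [mul_div_assoc]
  linarith [h3.2]

lemma regime3 (B U : Finset (ZMod p)) (hB : (0 : ZMod p) ∉ B) (q r : ℝ) (hq : 1 ≤ q) (hr : 1 ≤ r)
    (hb : (B.card : ℝ) = r ^ 2) (hbs : r^2 ≤ q^4) (hus : (U.card:ℝ) ≤ q^4) (h1 : q^4 * r^4 ≤ p^2) (h2 : q^4 ≤ r^4) :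
    ∑ x ∈ B.offDiag, (inum U (gm x) : ℝ) ≤ 2^13 * (q^5 * r^3) := by
  set L := B.offDiag.image gm with hL
  have hc : ((B.offDiag.card : ℕ):ℝ) ≤ r^4 := by
    have : ((B.offDiag.card : ℕ):ℝ) ≤ (B.card:ℝ)^2 := by
      rw [offDiag_card, sq]
      exact_mod_cast Nat.sub_le _ _
    rw [hb] at this
    linarith [show (r^2)^2 = r^4 by ring]
  have hLc : (L.card:ℝ) ≤ r^4 := le_trans (by exact_mod_cast card_image_le) hc
  have hM : (L.card:ℝ) * U.card ≤ r^4 * q^4 := by gcongr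
  have hq4 : 1 ≤ q^4 := one_le_pow₀ hq
  have hN := lines_energy (2 * q^4) (by linarith) L U (by linarith) (by
    intro α β γ h
    have : (((L.filter fun l => α * l.1 + β * l.2 = γ).card : ℕ):ℝ) ≤ 2 * B.card := by
      exact_mod_cast line_bound B hB α β γ h
    rw [hb] at this
    linarith) (by
    have : (L.card:ℝ) * U.card ≤ (p:ℝ)^2 := by linarith
    exact_mod_cast this)
  have hsum := inum_sum_cs L U
  have hf := fib_sum B hB (fun l => (inum U l : ℝ)) (fun l => by positivity)
  rw [← hL] at hf
  have hbd : bd (2 * q^4) (L.card * U.card) (L.card * U.card) ≤ 2^22 * (q^6 * r^6) := by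
    set M := (L.card:ℝ) * U.card with hMdef
    have hM0 : 0 ≤ M := by positivity
    have hs : √M ≤ q^2 * r^2 := by
      apply Real.sqrt_le_iff.2 ⟨by positivity, ?_⟩
      linarith [show (q^2*r^2)^2 = r^4*q^4 by ring]
    have e1 : M * √M ≤ (r^4*q^4) * (q^2*r^2) := by gcongr
    have e2 : q^4 * M ≤ q^4 * (r^4 * q^4) := by gcongr
    have e3 : q^2 ≤ r^2 := by
      apply le_of_sq_le_sq _ (by positivity)
      linarith [show (q^2)^2 = q^4 by ring, show (r^2)^2 = r^4 by ring]
    have e4 : q^4 * (r^4 * q^4) ≤ q^6 * r^6 := by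
      have : q^6 * r^4 * q^2 ≤ q^6 * r^4 * r^2 := by gcongr
      linarith [show q^6 * r^4 * q^2 = q^4 * (r^4 * q^4) by ring, show q^6 * r^4 * r^2 = q^6 * r^6 by ring]
    unfold bd
    rw [Nat.cast_mul, ← hMdef]
    have e5 : (r^4*q^4) * (q^2*r^2) = q^6 * r^6 := by ring
    have e6 : 0 ≤ q^6 * r^6 := by positivity
    nlinarith
  have hS0 : 0 ≤ ∑ l ∈ L, (inum U l : ℝ) := by positivity
  have : (∑ l ∈ L, (inum U l : ℝ))^2 ≤ (2^11 * (q^5 * r^3))^2 := by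
    calc _ ≤ _ := hsum
      _ ≤ q^4 * (2^22 * (q^6 * r^6)) := by
        apply mul_le_mul hus (hN.trans hbd) (by positivity) (by positivity)
      _ = _ := by ring
  have h5 := abs_le_of_sq_le_sq' this (by positivity)
  have h6 : 0 ≤ q^5 * r^3 := by positivity
  linarith [h5.2]

end Regimes


section Final

lemma off_bound {p : ℕ} [Fact p.Prime] (B U : Finset (ZMod p)) (hB : (0 : ZMod p) ∉ B) (q r : ℝ) (hq : 1 ≤ q) (hr : 1 ≤ r)
    (hb : (B.card : ℝ) = r ^ 2) (hbs : r^2 ≤ q^4) (hus : (U.card:ℝ) ≤ q^4) :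
    ∑ x ∈ B.offDiag, (inum U (gm x) : ℝ) ≤ (q^4)^2 * (B.card:ℝ)^2 / p + 2^13 * (q^5 * r^3) + (q^4)^2 := by
  have hp : (0:ℝ) < p := by exact_mod_cast (Fact.out : p.Prime).pos
  have hmain : 0 ≤ (q^4)^2 * (B.card:ℝ)^2 / p := by positivity
  have hT : 0 ≤ q^5 * r^3 := by positivity
  have hS : 0 ≤ (q^4)^2 := by positivity
  rcases le_total (q^4 * r^4) ((p:ℝ)^2) with h1 | h1
  · rcases le_total (q^4) (r^4) with h2 | h2
    · have := regime3 B U hB q r hq hr hb hbs hus h1 h2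
      linarith
    · have : ∑ x ∈ B.offDiag, (inum U (gm x) : ℝ) ≤ (q^4)^2 := by
        calc _ ≤ ∑ x ∈ B.offDiag, (q^4 : ℝ) := by
              apply sum_le_sum
              intro x _
              exact le_trans (by exact_mod_cast inum_le U _) hus
          _ = B.offDiag.card * q^4 := by rw [sum_const, nsmul_eq_mul]
          _ ≤ (B.card:ℝ)^2 * q^4 := by
              gcongr
              rw [offDiag_card, sq]
              exact_mod_cast Nat.sub_le _ _
          _ = r^4 * q^4 := by rw [hb]; ring
          _ ≤ q^4 * q^4 := by gcongr
          _ = _ := by ring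
      linarith
  · have h3 := regime1 B U hB
    have h4 : (B.card:ℝ)^2 * (U.card:ℝ)^2 / p ≤ (q^4)^2 * (B.card:ℝ)^2 / p := by
      rw [mul_comm]; gcongr
    have h5 : √(2 * p) ≤ 2 * (q * r) := by
      apply Real.sqrt_le_iff.2 ⟨by positivity, ?_⟩
      have : (p:ℝ) ≤ (q*r)^2 := by
        apply le_of_sq_le_sq _ (by positivity)
        linarith [show ((q*r)^2)^2 = q^4 * r^4 by ring]
      nlinarith
    have h6 : (B.card:ℝ) * U.card * √(2 * p) ≤ 2 * (q^5 * r^3) := by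
      calc _ ≤ r^2 * q^4 * (2 * (q * r)) := by rw [hb]; gcongr
        _ = _ := by ring
    linarith

lemma final_num (s K a b u P E I O : ℝ) (hP : 0 < P) (hu0 : 0 ≤ u) (hK : 1 ≤ K) (ha : 1 ≤ a) (hb : 1 ≤ b) (hbs : b ≤ s)
    (hus : u ≤ s) (hs : s ≤ K * a) (h1 : E ≤ a^2 + I) (h2 : I ≤ b * u + O)
    (h3 : O ≤ s^2 * b^2 / P + 2^13 * (s ^ ((5:ℝ)/4) * b ^ ((3:ℝ)/2)) + s^2) :
    E - K^2 * a^2 * b^2 / P ≤ 2^13 * (K ^ ((5:ℝ)/4) * a ^ ((5:ℝ)/4) * b ^ ((3:ℝ)/2) + K^2 * a^2) := by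
  have hs0 : 0 ≤ s := by linarith
  have hb0 : 0 ≤ b := by linarith
  have h4 : b * u ≤ s^2 := by rw [sq]; exact mul_le_mul hbs hus hu0 hs0
  have hs2 : s^2 ≤ K^2 * a^2 := by rw [← mul_pow]; exact pow_le_pow_left₀ hs0 hs 2
  have hA2 : a^2 ≤ K^2 * a^2 := by
    have : 1 ≤ K^2 := one_le_pow₀ hK
    nlinarith [sq_nonneg a]
  have h5 : s ^ ((5:ℝ)/4) ≤ K ^ ((5 : ℝ) / 4) * a ^ ((5 : ℝ) / 4) := by
    rw [← Real.mul_rpow (by linarith) (by linarith)]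
    exact Real.rpow_le_rpow (by linarith) hs (by norm_num)
  have h6 : s ^ ((5:ℝ)/4) * b ^ ((3:ℝ)/2) ≤ K ^ ((5 : ℝ) / 4) * a ^ ((5 : ℝ) / 4) * b ^ ((3:ℝ)/2) :=
    mul_le_mul_of_nonneg_right h5 (Real.rpow_nonneg hb0 _)
  have h7 : s^2 * b^2 / P ≤ K ^ 2 * a ^ 2 * b ^ 2 / P := by gcongr
  have h8 : 0 ≤ K^2 * a^2 := by positivity
  linarith

end Final

theorem stmt15 :
    ∃ C : ℝ,
      ∀ (p : ℕ), p.Prime → Odd p →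
        ∀ K : ℝ, 1 ≤ K →
          ∀ A B : Finset (ZMod p), A.Nonempty → B.Nonempty →
            (0 : ZMod p) ∉ A → (0 : ZMod p) ∉ B →
            ((sumSet p A B).card : ℝ) ≤ K * A.card →
            (addEnergy2 p (A.image fun a => a⁻¹) (B.image fun b => b⁻¹) : ℝ) -
                K ^ 2 * (A.card : ℝ) ^ 2 * (B.card : ℝ) ^ 2 / p ≤
              C * (K ^ ((5 : ℝ) / 4) * (A.card : ℝ) ^ ((5 : ℝ) / 4) * (B.card : ℝ) ^ ((3 : ℝ) / 2) +
                K ^ 2 * (A.card : ℝ) ^ 2) := by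
  refine ⟨2^13, ?_⟩
  intro p hp _ K hK A B hAn hBn hA hB hs
  have : Fact p.Prime := ⟨hp⟩
  have hp0 : (0:ℝ) < p := by exact_mod_cast hp.pos
  obtain ⟨s, hsdef⟩ : ∃ s : ℝ, s = ((sumSet p A B).card : ℝ) := ⟨_, rfl⟩
  rw [← hsdef] at hs
  set U := (sumSet p A B).image fun a => a⁻¹ with hU
  have hUs : (U.card : ℝ) ≤ s := by rw [hsdef]; exact_mod_cast card_image_le
  have hBs : (B.card : ℝ) ≤ s := by
    obtain ⟨a, ha⟩ := hAn
    have : B.card ≤ (sumSet p A B).card := by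
      apply Finset.card_le_card_of_injOn (fun b => a + b)
      · intro b hb
        exact mem_image.2 ⟨(a, b), mem_product.2 ⟨ha, hb⟩, rfl⟩
      · intro x _ y _ hxy
        exact add_left_cancel hxy
    rw [hsdef]; exact_mod_cast this
  have hB1 : (1:ℝ) ≤ B.card := by exact_mod_cast hBn.card_pos
  have hA1 : (1:ℝ) ≤ A.card := by exact_mod_cast hAn.card_pos
  have hs1 : 1 ≤ s := hB1.trans hBs
  obtain ⟨q, hq⟩ : ∃ q : ℝ, q = s ^ ((1:ℝ)/4) := ⟨_, rfl⟩
  obtain ⟨r, hr⟩ : ∃ r : ℝ, r = (B.card:ℝ) ^ ((1:ℝ)/2) := ⟨_, rfl⟩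
  have hq1 : 1 ≤ q := hq ▸ Real.one_le_rpow hs1 (by norm_num)
  have hr1 : 1 ≤ r := hr ▸ Real.one_le_rpow hB1 (by norm_num)
  have hq4 : q^4 = s := by
    rw [hq, ← Real.rpow_natCast, ← Real.rpow_mul (by linarith)]; norm_num
  have hq5 : q^5 = s ^ ((5:ℝ)/4) := by
    rw [hq, ← Real.rpow_natCast, ← Real.rpow_mul (by linarith)]; norm_num
  have hr2 : (B.card:ℝ) = r^2 := by
    rw [hr, ← Real.rpow_natCast, ← Real.rpow_mul (by linarith)]; norm_num
  have hr3 : r^3 = (B.card:ℝ) ^ ((3:ℝ)/2) := by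
    rw [hr, ← Real.rpow_natCast, ← Real.rpow_mul (by linarith)]; norm_num
  have h1 : (addEnergy2 p (A.image fun a => a⁻¹) (B.image fun b => b⁻¹) : ℝ) ≤ (A.card:ℝ)^2 + Icount B U := by
    exact_mod_cast red1 A B hA hB
  have h2 : (Icount B U : ℝ) ≤ B.card * U.card + ∑ x ∈ B.offDiag, (inum U (gm x) : ℝ) := by
    exact_mod_cast red2 B U hB
  have h3 := off_bound B U hB q r hq1 hr1 hr2 (by rw [← hr2, hq4]; exact hBs) (by rw [hq4]; exact hUs)
  rw [hq4, hq5, hr3] at h3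
  exact final_num s K _ _ _ _ _ _ _ hp0 (Nat.cast_nonneg U.card) hK hA1 hB1 hBs hUs hs h1 h2 h3
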